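/- arXiv:1208.3510 — 7 statements merged into one kernel-verified Lean document; each statement's English description precedes it below -/
import Mathlib

section
/- Let F : [a,b] × [0,T) → ℝ² be a smooth planar curve shortening flow with nonvanishing speed. Then the total length 𝓛(t) = ∫_a^b ‖∂_u F(u,t)‖ du is differentiable in t and satisfies d𝓛/dt = -∫_a^b κ(u,t)² ‖∂_u F(u,t)‖ du. -/
open Real MeasureTheory Set Filter

noncomputable section

/-- The Euclidean plane. -/
abbrev E2 : Type := EuclideanSpace ℝ (Fin 2)

/-- Rotation of a vector by +π/2. -/
def rot (w : E2) : E2 := !₂[-(w 1), w 0]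

namespace CSF

variable (F : ℝ → ℝ → E2)

/-- The partial derivative ∂ᵤF. -/
def pu (u t : ℝ) : E2 := deriv (fun x => F x t) u

/-- The partial derivative ∂ₜF. -/
def pt (u t : ℝ) : E2 := deriv (fun x => F u x) t

/-- The speed v = ‖∂ᵤF‖. -/
def speed (u t : ℝ) : ℝ := ‖pu F u t‖

/-- The arclength derivative ∂ₛ f = v⁻¹ ∂ᵤ f of a quantity along the flow. -/
def sderiv {X : Type*} [NormedAddCommGroup X] [NormedSpace ℝ X]
    (f : ℝ → ℝ → X) (u t : ℝ) : X :=
  (speed F u t)⁻¹ • deriv (fun x => f x t) u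

/-- The unit tangent T = ∂ₛ F. -/
def tang (u t : ℝ) : E2 := (speed F u t)⁻¹ • pu F u t

/-- The unit normal N, the tangent rotated by +π/2. -/
def nor (u t : ℝ) : E2 := rot (tang F u t)

/-- The curvature κ = ⟨∂ₛT, N⟩. -/
def curv (u t : ℝ) : ℝ := inner (𝕜 := ℝ) (sderiv F (tang F) u t) (nor F u t)

/-- `F` is a smooth planar curve shortening flow with nonvanishing speed on `[a,b] × [0,T)`:
it is smooth, `∂ᵤF ≠ 0` on the domain, and `∂ₜF = κN` on the domain. -/
def IsCSF (a b T : ℝ) : Prop :=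
  ContDiff ℝ (⊤ : ℕ∞) (fun p : ℝ × ℝ => F p.1 p.2) ∧
  (∀ u ∈ Icc a b, ∀ t ∈ Ico 0 T, pu F u t ≠ 0) ∧
  (∀ u ∈ Icc a b, ∀ t ∈ Ico 0 T, pt F u t = curv F u t • nor F u t)

end CSF

open Topology

namespace CSF

lemma hasDerivAt_fst {X : Type*} [NormedAddCommGroup X] [NormedSpace ℝ X] {G : ℝ × ℝ → X}
    (u t : ℝ) (h : DifferentiableAt ℝ G (u, t)) :
    HasDerivAt (fun x => G (x, t)) (fderiv ℝ G (u, t) (1, 0)) u :=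
  HasFDerivAt.comp_hasDerivAt (l := G) u h.hasFDerivAt
    ((hasDerivAt_id u).prodMk (hasDerivAt_const u t))

lemma hasDerivAt_snd {X : Type*} [NormedAddCommGroup X] [NormedSpace ℝ X] {G : ℝ × ℝ → X}
    (u t : ℝ) (h : DifferentiableAt ℝ G (u, t)) :
    HasDerivAt (fun x => G (u, x)) (fderiv ℝ G (u, t) (0, 1)) t :=
  HasFDerivAt.comp_hasDerivAt (l := G) t h.hasFDerivAt
    ((hasDerivAt_const t u).prodMk (hasDerivAt_id t))

lemma inner_rot (w : E2) : inner ℝ (rot w) w = 0 := by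
  simp [rot, PiLp.inner_apply, Fin.sum_univ_two]; ring

lemma rot_smul (c : ℝ) (w : E2) : rot (c • w) = c • rot w := by
  ext i; fin_cases i <;> simp [rot]

end CSF

open CSF in
theorem length_evolution (a b T : ℝ) (hab : a < b) (hT : 0 < T)
    (F : ℝ → ℝ → E2) (hF : CSF.IsCSF F a b T) :
    ∀ t ∈ Ico 0 T,
      HasDerivAt (fun x => ∫ u in a..b, CSF.speed F u x)
        (-∫ u in a..b, (CSF.curv F u t) ^ 2 * CSF.speed F u t) t := by
  intro t ht
  obtain ⟨hs, hne, hflow⟩ := hF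
  set G : ℝ × ℝ → E2 := fun p => F p.1 p.2 with hG
  have hGd : Differentiable ℝ G := hs.differentiable (by simp)
  have h2top : (2 : WithTop ℕ∞) ≤ ((⊤ : ℕ∞) : WithTop ℕ∞) := by
    have : ((2 : ℕ∞) : WithTop ℕ∞) ≤ ((⊤ : ℕ∞) : WithTop ℕ∞) := WithTop.coe_le_coe.2 le_top
    exact this
  have hG' : ContDiff ℝ 1 (fderiv ℝ G) :=
    (hs.of_le h2top).fderiv_right (by rw [one_add_one_eq_two])
  have hpu : ∀ u t, pu F u t = fderiv ℝ G (u, t) (1, 0) := fun u t =>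
    (hasDerivAt_fst (G := G) u t (hGd _)).deriv
  have hpt : ∀ u t, pt F u t = fderiv ℝ G (u, t) (0, 1) := fun u t =>
    (hasDerivAt_snd (G := G) u t (hGd _)).deriv
  set P : ℝ × ℝ → E2 := fun p => fderiv ℝ G p (1, 0) with hP
  set Q : ℝ × ℝ → E2 := fun p => fderiv ℝ G p (0, 1) with hQ
  have hPc : ContDiff ℝ 1 P := hG'.clm_apply contDiff_const
  have hQc : ContDiff ℝ 1 Q := hG'.clm_apply contDiff_const
  have hPd : Differentiable ℝ P := hPc.differentiable (by simp)
  have hQd : Differentiable ℝ Q := hQc.differentiable (by simp)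
  have hG'd : Differentiable ℝ (fderiv ℝ G) := hG'.differentiable (by simp)
  have hfP : ∀ p w, fderiv ℝ P p w = fderiv ℝ (fderiv ℝ G) p w (1, 0) := by
    intro p w
    have := ((hG'd p).hasFDerivAt.clm_apply (hasFDerivAt_const ((1:ℝ), (0:ℝ)) p)).fderiv
    rw [hP, this]; simp
  have hfQ : ∀ p w, fderiv ℝ Q p w = fderiv ℝ (fderiv ℝ G) p w (0, 1) := by
    intro p w
    have := ((hG'd p).hasFDerivAt.clm_apply (hasFDerivAt_const ((0:ℝ), (1:ℝ)) p)).fderiv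
    rw [hQ, this]; simp
  have hsymm : ∀ p, fderiv ℝ P p (0, 1) = fderiv ℝ Q p (1, 0) := by
    intro p
    rw [hfP, hfQ]
    have : IsSymmSndFDerivAt ℝ G p := hs.contDiffAt.isSymmSndFDerivAt (by simpa using h2top)
    exact this _ _
  have hspeed : ∀ u t, speed F u t = ‖P (u, t)‖ := fun u t => by rw [speed, hpu]
  have hPt : Continuous (fun p => fderiv ℝ P p (0, 1)) :=
    (hPc.continuous_fderiv (by simp)).clm_apply continuous_const
  -- derivative of the speed
  set F' : ℝ → ℝ := fun u => inner ℝ (fderiv ℝ P (u, t) (0, 1)) (P (u, t)) / ‖P (u, t)‖ with hF'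
  have hvt : ∀ u ∈ Icc a b, HasDerivAt (fun x => ‖P (u, x)‖) (F' u) t := by
    intro u hu
    have h0 : P (u, t) ≠ 0 := by have := hne u hu t ht; rwa [hpu] at this
    have h1 := (hasDerivAt_snd u t (hPd (u, t))).norm_sq
    have h2 := h1.sqrt (by positivity)
    simp only [Real.sqrt_sq (norm_nonneg _)] at h2
    convert h2 using 1
    rw [hF', real_inner_comm]
    have : ‖P (u, t)‖ ≠ 0 := by positivity
    field_simp
  have hkey : ∀ u ∈ Ioo a b, F' u = -((curv F u t) ^ 2 * speed F u t) := by
    intro u hu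
    have huI := Ioo_subset_Icc_self hu
    have h0 : P (u, t) ≠ 0 := by have := hne u huI t ht; rwa [hpu] at this
    have hv : ‖P (u, t)‖ ≠ 0 := by positivity
    have hPu := hasDerivAt_fst u t (hPd (u, t))
    have hQu := hasDerivAt_fst u t (hQd (u, t))
    have hnor : nor F u t = ‖P (u, t)‖⁻¹ • rot (P (u, t)) := by
      rw [nor, tang, rot_smul, hspeed, hpu]
    have hQP : Q (u, t) = curv F u t • nor F u t := by
      have := hflow u huI t ht; rwa [hpt] at this
    have horth : (fun x => inner ℝ (Q (x, t)) (P (x, t))) =ᶠ[𝓝 u] fun _ => (0:ℝ) := by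
      filter_upwards [Ioo_mem_nhds hu.1 hu.2] with x hx
      have := hflow x (Ioo_subset_Icc_self hx) t ht
      rw [hpt] at this
      change Q (x, t) = _ at this
      rw [this, nor, tang, rot_smul, hpu, inner_smul_left, inner_smul_left, inner_rot]
      simp
    have hd := (hQu.inner ℝ hPu).unique ((hasDerivAt_const u (0:ℝ)).congr_of_eventuallyEq horth)
    -- curvature
    have hvu : ∃ c, HasDerivAt (fun x => ‖P (x, t)‖⁻¹) c u := by
      have h2 := hPu.norm_sq.sqrt (by positivity)
      simp only [Real.sqrt_sq (norm_nonneg _)] at h2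
      exact ⟨_, h2.inv hv⟩
    obtain ⟨c, hc⟩ := hvu
    have htang : (fun x => tang F x t) = fun x => ‖P (x, t)‖⁻¹ • P (x, t) := by
      funext x; rw [tang, hspeed, hpu]
    have hcurv : curv F u t = (‖P (u, t)‖⁻¹) ^ 2 *
        inner ℝ (fderiv ℝ P (u, t) (1, 0)) (nor F u t) := by
      have hz : inner ℝ (P (u, t)) (nor F u t) = 0 := by
        rw [hnor, inner_smul_right, real_inner_comm, inner_rot, mul_zero]
      have hsm : deriv (fun x => ‖P (x, t)‖⁻¹ • P (x, t)) u = _ := (hc.smul hPu).deriv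
      rw [curv, sderiv, htang, hsm, hspeed, inner_smul_left, inner_add_left,
        inner_smul_left, inner_smul_left, hz]
      simp; ring
    rw [hQP, inner_smul_left, real_inner_comm] at hd
    have hd' : inner ℝ (fderiv ℝ Q (u, t) (1, 0)) (P (u, t)) =
        - (curv F u t * inner ℝ (fderiv ℝ P (u, t) (1, 0)) (nor F u t)) := by
      simp at hd; linarith
    have hI : inner ℝ (fderiv ℝ P (u, t) (1, 0)) (nor F u t) = curv F u t * ‖P (u, t)‖ ^ 2 := by
      rw [hcurv]; field_simp
    rw [hF']
    simp only
    rw [hsymm, hd', hI, hspeed]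
    field_simp
  have hint : (-∫ u in a..b, (curv F u t) ^ 2 * speed F u t) = ∫ u in a..b, F' u := by
    rw [← intervalIntegral.integral_neg, intervalIntegral.integral_of_le hab.le,
      intervalIntegral.integral_of_le hab.le, integral_Ioc_eq_integral_Ioo,
      integral_Ioc_eq_integral_Ioo]
    exact setIntegral_congr_fun measurableSet_Ioo fun u hu => (hkey u hu).symm
  rw [hint]
  simp only [hspeed]
  obtain ⟨C, hC⟩ := (isCompact_Icc (a := a) (b := b)).prod
    (isCompact_closedBall t (1:ℝ)) |>.exists_bound_of_continuousOn hPt.continuousOn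
  have hsub : ∀ u, u ∈ uIoc a b → u ∈ Icc a b := fun u hu => by
    rw [uIoc_of_le hab.le] at hu; exact Ioc_subset_Icc_self hu
  have hcont : ∀ x, Continuous fun u => ‖P (u, x)‖ := fun x => by
    have := hPc.continuous; fun_prop
  refine (intervalIntegral.hasDerivAt_integral_of_dominated_loc_of_lip
    (F := fun x u => ‖P (u, x)‖) (F' := F') (bound := fun _ => C)
    (Metric.ball_mem_nhds t one_pos) ?_ ?_ ?_ ?_ ?_ ?_).2
  · exact Eventually.of_forall fun x => (hcont x).aestronglyMeasurable
  · exact (hcont t).intervalIntegrable _ _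
  · apply Measurable.aestronglyMeasurable
    have h1 : Continuous fun u => inner ℝ (fderiv ℝ P (u, t) (0, 1)) (P (u, t)) :=
      (hPt.comp (by fun_prop : Continuous fun u : ℝ => (u, t))).inner
        (hPc.continuous.comp (by fun_prop : Continuous fun u : ℝ => (u, t)))
    exact h1.measurable.div (hcont t).measurable
  · refine Eventually.of_forall fun u hu => ?_
    apply LipschitzOnWith.of_dist_le_mul
    intro x hx y hy
    have := (convex_ball t (1:ℝ)).norm_image_sub_le_of_norm_hasDerivWithin_le
      (f := fun x => P (u, x)) (C := C)
      (fun z hz => (hasDerivAt_snd u z (hPd (u, z))).hasDerivWithinAt)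
      (fun z hz => hC (u, z) ⟨hsub u hu, Metric.ball_subset_closedBall hz⟩) hy hx
    rw [Real.dist_eq, Real.dist_eq]
    refine (abs_norm_sub_norm_le _ _).trans (this.trans ?_)
    rw [Real.norm_eq_abs]
    gcongr
    simpa using le_abs_self C
  · exact intervalIntegrable_const
  · exact Eventually.of_forall fun u hu => hvt u (hsub u hu)
end
end

section
/- Let F : [a,b] × [0,T) → ℝ² be a smooth planar curve shortening flow with nonvanishing speed. Then the curvature satisfies the parabolic evolution equation ∂_t κ = ∂_s² κ + κ³ at every (u,t), where ∂_s = v⁻¹ ∂_u with v = ‖∂_u F‖. -/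
open Real MeasureTheory Set Filter

noncomputable section

namespace CSFaux

def D1 (f : ℝ → ℝ → ℝ) (u t : ℝ) : ℝ := deriv (fun x => f x t) u
def D2 (f : ℝ → ℝ → ℝ) (u t : ℝ) : ℝ := deriv (fun x => f u x) t

def Sm (f : ℝ → ℝ → ℝ) : Prop := ContDiff ℝ (⊤ : ℕ∞) (fun p : ℝ × ℝ => f p.1 p.2)

theorem Sm.h1' {f : ℝ → ℝ → ℝ} (h : Sm f) (u t : ℝ) :
    HasDerivAt (fun x => f x t) (fderiv ℝ (fun p : ℝ × ℝ => f p.1 p.2) (u, t) (1, 0)) u := by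
  have h1 : HasFDerivAt (fun p : ℝ × ℝ => f p.1 p.2) _ (u, t) :=
    (ContDiff.differentiable h (by simp) (u, t)).hasFDerivAt
  have h2 : HasDerivAt (fun x : ℝ => (x, t)) ((1 : ℝ), (0 : ℝ)) u :=
    (hasDerivAt_id u).prodMk (hasDerivAt_const u t)
  exact h1.comp_hasDerivAt u h2

theorem Sm.h2' {f : ℝ → ℝ → ℝ} (h : Sm f) (u t : ℝ) :
    HasDerivAt (fun x => f u x) (fderiv ℝ (fun p : ℝ × ℝ => f p.1 p.2) (u, t) (0, 1)) t := by
  have h1 : HasFDerivAt (fun p : ℝ × ℝ => f p.1 p.2) _ (u, t) :=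
    (ContDiff.differentiable h (by simp) (u, t)).hasFDerivAt
  have h2 : HasDerivAt (fun x : ℝ => (u, x)) ((0 : ℝ), (1 : ℝ)) t :=
    (hasDerivAt_const t u).prodMk (hasDerivAt_id t)
  exact h1.comp_hasDerivAt t h2

theorem Sm.h1 {f : ℝ → ℝ → ℝ} (h : Sm f) (u t : ℝ) :
    HasDerivAt (fun x => f x t) (D1 f u t) u := (h.h1' u t).differentiableAt.hasDerivAt

theorem Sm.h2 {f : ℝ → ℝ → ℝ} (h : Sm f) (u t : ℝ) :
    HasDerivAt (fun x => f u x) (D2 f u t) t := (h.h2' u t).differentiableAt.hasDerivAt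

theorem Sm.D1_eq {f : ℝ → ℝ → ℝ} (h : Sm f) (u t : ℝ) :
    D1 f u t = fderiv ℝ (fun p : ℝ × ℝ => f p.1 p.2) (u, t) (1, 0) := (h.h1' u t).deriv

theorem Sm.D2_eq {f : ℝ → ℝ → ℝ} (h : Sm f) (u t : ℝ) :
    D2 f u t = fderiv ℝ (fun p : ℝ × ℝ => f p.1 p.2) (u, t) (0, 1) := (h.h2' u t).deriv

theorem Sm.D1 {f : ℝ → ℝ → ℝ} (h : Sm f) : Sm (D1 f) := by
  have : (fun p : ℝ × ℝ => CSFaux.D1 f p.1 p.2) =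
      fun p => fderiv ℝ (fun p : ℝ × ℝ => f p.1 p.2) p (1, 0) := by
    ext p; exact h.D1_eq p.1 p.2
  unfold Sm
  rw [this]
  exact (ContDiff.fderiv_right (m := (⊤ : ℕ∞)) h (by simp)).clm_apply contDiff_const

theorem Sm.D2 {f : ℝ → ℝ → ℝ} (h : Sm f) : Sm (D2 f) := by
  have : (fun p : ℝ × ℝ => CSFaux.D2 f p.1 p.2) =
      fun p => fderiv ℝ (fun p : ℝ × ℝ => f p.1 p.2) p (0, 1) := by
    ext p; exact h.D2_eq p.1 p.2
  unfold Sm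
  rw [this]
  exact (ContDiff.fderiv_right (m := (⊤ : ℕ∞)) h (by simp)).clm_apply contDiff_const

theorem Sm.comm {f : ℝ → ℝ → ℝ} (h : Sm f) (u t : ℝ) :
    CSFaux.D2 (CSFaux.D1 f) u t = CSFaux.D1 (CSFaux.D2 f) u t := by
  have hd : DifferentiableAt ℝ (fderiv ℝ (fun p : ℝ × ℝ => f p.1 p.2)) (u, t) :=
    (ContDiff.fderiv_right (m := (⊤ : ℕ∞)) h (by simp)).differentiable (by simp) _
  have e1 : (fun p : ℝ × ℝ => CSFaux.D1 f p.1 p.2) =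
      fun p => fderiv ℝ (fun p : ℝ × ℝ => f p.1 p.2) p (1, 0) := by
    ext p; exact h.D1_eq p.1 p.2
  have e2 : (fun p : ℝ × ℝ => CSFaux.D2 f p.1 p.2) =
      fun p => fderiv ℝ (fun p : ℝ × ℝ => f p.1 p.2) p (0, 1) := by
    ext p; exact h.D2_eq p.1 p.2
  have hs : IsSymmSndFDerivAt ℝ (fun p : ℝ × ℝ => f p.1 p.2) (u, t) :=
    (ContDiff.contDiffAt h).isSymmSndFDerivAt (by simp [minSmoothness_of_isRCLikeNormedField]; exact WithTop.coe_le_coe.2 (le_top : (2 : ℕ∞) ≤ ⊤))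
  rw [h.D1.D2_eq, h.D2.D1_eq, e1, e2,
    fderiv_clm_apply hd (differentiableAt_const _), fderiv_clm_apply hd (differentiableAt_const _)]
  simp
  exact hs.eq _ _

theorem derivEq {a b : ℝ} (hab : a < b) {f g : ℝ → ℝ} (he : ∀ w ∈ Icc a b, f w = g w)
    {u f' g' : ℝ} (hu : u ∈ Icc a b) (hf : HasDerivAt f f' u) (hg : HasDerivAt g g' u) :
    f' = g' := by
  have h1 := (hf.hasDerivWithinAt (s := Icc a b)).congr (f₁ := g) (fun w hw => (he w hw).symm)
    (he u hu).symm
  exact (uniqueDiffOn_Icc hab u hu).eq_deriv _ h1 hg.hasDerivWithinAt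

/-- speed and curvature in coordinates -/
def V (p q : ℝ → ℝ → ℝ) (u t : ℝ) : ℝ := √(p u t ^ 2 + q u t ^ 2)
def K (p q : ℝ → ℝ → ℝ) (u t : ℝ) : ℝ :=
  (p u t * D1 q u t - q u t * D1 p u t) * (V p q u t)⁻¹ ^ 3

theorem V_sq (p q : ℝ → ℝ → ℝ) (u t : ℝ) : V p q u t ^ 2 = p u t ^ 2 + q u t ^ 2 :=
  Real.sq_sqrt (by positivity)

theorem V1 {p q : ℝ → ℝ → ℝ} (hp : Sm p) (hq : Sm q) {u t : ℝ} (h0 : V p q u t ≠ 0) :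
    HasDerivAt (fun x => V p q x t)
      ((p u t * D1 p u t + q u t * D1 q u t) * (V p q u t)⁻¹) u := by
  have h := (((hp.h1 u t).pow 2).add ((hq.h1 u t).pow 2)).sqrt (by
    intro h; apply h0; unfold V; simp at h; rw [h]; simp)
  refine h.congr_deriv ?_
  simp only [Pi.add_apply, Pi.pow_apply]
  have e : √(p u t ^ 2 + q u t ^ 2) = V p q u t := rfl
  rw [e]
  field_simp
  simp
  try ring

theorem V2 {p q : ℝ → ℝ → ℝ} (hp : Sm p) (hq : Sm q) {u t : ℝ} (h0 : V p q u t ≠ 0) :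
    HasDerivAt (fun x => V p q u x)
      ((p u t * D2 p u t + q u t * D2 q u t) * (V p q u t)⁻¹) t := by
  have h := (((hp.h2 u t).pow 2).add ((hq.h2 u t).pow 2)).sqrt (by
    intro h; apply h0; unfold V; simp at h; rw [h]; simp)
  refine h.congr_deriv ?_
  simp only [Pi.add_apply, Pi.pow_apply]
  have e : √(p u t ^ 2 + q u t ^ 2) = V p q u t := rfl
  rw [e]
  field_simp
  simp
  try ring

theorem Sm.slice {f : ℝ → ℝ → ℝ} (h : Sm f) (t : ℝ) : ContDiff ℝ (⊤ : ℕ∞) (fun x => f x t) :=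
  ContDiff.comp (g := fun p : ℝ × ℝ => f p.1 p.2) h (contDiff_id.prodMk contDiff_const)

theorem Ksm {p q : ℝ → ℝ → ℝ} (hp : Sm p) (hq : Sm q) {u t : ℝ} (h0 : V p q u t ≠ 0) :
    ContDiffAt ℝ 2 (fun x => K p q x t) u := by
  have l : ((2 : ℕ∞) : WithTop ℕ∞) ≤ ((⊤ : ℕ∞) : WithTop ℕ∞) := by exact_mod_cast le_top
  have c1 := ((hp.slice t).of_le l).contDiffAt (x := u)
  have c2 := ((hq.slice t).of_le l).contDiffAt (x := u)
  have c3 := ((hp.D1.slice t).of_le l).contDiffAt (x := u)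
  have c4 := ((hq.D1.slice t).of_le l).contDiffAt (x := u)
  have hV : ContDiffAt ℝ 2 (fun x => V p q x t) u := by
    unfold V
    refine ((c1.pow 2).add (c2.pow 2)).sqrt ?_
    intro h; apply h0; unfold V; rw [h]; simp
  unfold K
  exact ((c1.mul c4).sub (c2.mul c3)).mul ((hV.inv h0).pow 3)

theorem K1 {p q : ℝ → ℝ → ℝ} (hp : Sm p) (hq : Sm q) {u t : ℝ} (h0 : V p q u t ≠ 0) :
    HasDerivAt (fun x => K p q x t) (D1 (K p q) u t) u :=
  ((Ksm hp hq h0).differentiableAt (by simp)).hasDerivAt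

theorem K11 {p q : ℝ → ℝ → ℝ} (hp : Sm p) (hq : Sm q) {u t : ℝ} (h0 : V p q u t ≠ 0) :
    HasDerivAt (fun x => D1 (K p q) x t) (D1 (D1 (K p q)) u t) u := by
  have : ContDiffAt ℝ 1 (deriv (fun x => K p q x t)) u :=
    ((Ksm hp hq h0).fderiv_right (m := 1) (by norm_num)).clm_apply contDiffAt_const
  exact (this.differentiableAt (by simp)).hasDerivAt

theorem core {a b t : ℝ} (hab : a < b) {p q X Y : ℝ → ℝ → ℝ} (hp : Sm p) (hq : Sm q)
    (hX : Sm X) (hY : Sm Y)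
    (h0 : ∀ u ∈ Icc a b, V p q u t ≠ 0)
    (eX : ∀ u ∈ Icc a b, X u t = - (K p q u t * (q u t * (V p q u t)⁻¹)))
    (eY : ∀ u ∈ Icc a b, Y u t = K p q u t * (p u t * (V p q u t)⁻¹))
    (e1 : ∀ u, D2 p u t = D1 X u t) (e2 : ∀ u, D2 q u t = D1 Y u t)
    (e3 : ∀ u, D2 (D1 p) u t = D1 (D1 X) u t) (e4 : ∀ u, D2 (D1 q) u t = D1 (D1 Y) u t)
    {u : ℝ} (hu : u ∈ Icc a b) :
    D2 (K p q) u t = (V p q u t)⁻¹ * D1 (fun u t => (V p q u t)⁻¹ * D1 (K p q) u t) u t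
      + K p q u t ^ 3 := by
  let v := fun x => V p q x t
  let k := fun x => K p q x t
  let k1 := fun x => D1 (K p q) x t
  let k2 := D1 (D1 (K p q)) u t
  let v1 := fun x => (p x t * D1 p x t + q x t * D1 q x t) * (V p q x t)⁻¹
  let c := fun x => p x t * (V p q x t)⁻¹
  let s := fun x => q x t * (V p q x t)⁻¹
  have hv : ∀ w ∈ Icc a b, HasDerivAt v (v1 w) w := fun w hw => V1 hp hq (h0 w hw)
  have hk : ∀ w ∈ Icc a b, HasDerivAt k (k1 w) w := fun w hw => K1 hp hq (h0 w hw)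
  have hk1 : HasDerivAt k1 k2 u := K11 hp hq (h0 u hu)
  have hvne : ∀ w ∈ Icc a b, v w ≠ 0 := h0
  have hcs : ∀ w ∈ Icc a b, c w ^ 2 + s w ^ 2 = 1 := by
    intro w hw
    have := h0 w hw
    have := V_sq p q w t
    simp only [c, s]; field_simp; linarith
  have hc : ∀ w ∈ Icc a b, HasDerivAt c (-(k w * v w * s w)) w := by
    intro w hw
    have h := (hp.h1 w t).mul ((hv w hw).inv (h0 w hw))
    refine h.congr_deriv ?_
    have := h0 w hw
    have := V_sq p q w t
    simp only [k, v, s, K, v1, Pi.inv_apply]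
    field_simp
    rw [this]; ring
  have hs : ∀ w ∈ Icc a b, HasDerivAt s (k w * v w * c w) w := by
    intro w hw
    have h := (hq.h1 w t).mul ((hv w hw).inv (h0 w hw))
    refine h.congr_deriv ?_
    have := h0 w hw
    have := V_sq p q w t
    simp only [k, v, c, K, v1, Pi.inv_apply]
    field_simp
    rw [this]; ring
  have dX : ∀ w ∈ Icc a b, D1 X w t = -(k1 w * s w + k w * (k w * v w * c w)) :=
    fun w hw => derivEq hab eX hw (hX.h1 w t) ((hk w hw).mul (hs w hw)).neg
  have dY : ∀ w ∈ Icc a b, D1 Y w t = k1 w * c w + k w * (-(k w * v w * s w)) :=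
    fun w hw => derivEq hab eY hw (hY.h1 w t) ((hk w hw).mul (hc w hw))
  have hku := hk u hu
  have hvu := hv u hu
  have hcu := hc u hu
  have hsu := hs u hu
  have ddX := derivEq hab dX hu (hX.D1.h1 u t)
    ((hk1.mul hsu).add (hku.mul ((hku.mul hvu).mul hcu))).neg
  have ddY := derivEq hab dY hu (hY.D1.h1 u t)
    ((hk1.mul hcu).add (hku.mul ((hku.mul hvu).mul hsu).neg))
  have hR : D1 (fun u t => (V p q u t)⁻¹ * D1 (K p q) u t) u t =
      -v1 u / v u ^ 2 * k1 u + (v u)⁻¹ * k2 := ((hvu.inv (h0 u hu)).mul hk1).deriv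
  have hL : D2 (K p q) u t = _ := ((((hp.h2 u t).mul (hq.D1.h2 u t)).sub
    ((hq.h2 u t).mul (hp.D1.h2 u t))).mul (((V2 hp hq (h0 u hu)).inv (h0 u hu)).pow 3)).deriv
  rw [hR, hL, e1, e2, e3, e4, ddX, ddY, dX u hu, dY u hu]
  have hpu : p u t = v u * c u := by
    have := h0 u hu
    simp only [v, c]; field_simp
  have hqu : q u t = v u * s u := by
    have := h0 u hu
    simp only [v, s]; field_simp
  have hpu1 : D1 p u t = v1 u * c u + v u * (-(k u * v u * s u)) := by
    have := h0 u hu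
    have := V_sq p q u t
    simp only [k, v, c, s, K, v1]
    field_simp
    rw [this]; ring
  have hqu1 : D1 q u t = v1 u * s u + v u * (k u * v u * c u) := by
    have := h0 u hu
    have := V_sq p q u t
    simp only [k, v, c, s, K, v1]
    field_simp
    rw [this]; ring
  have hVu : V p q u t = v u := rfl
  have hKu : K p q u t = k u := rfl
  have hv0 := hvne u hu
  have hcsu := hcs u hu
  simp only [Pi.mul_apply, Pi.pow_apply, Pi.inv_apply, Pi.sub_apply]
  rw [hpu1, hqu1, hpu, hqu, hVu, hKu]
  clear_value v k k1 k2 v1 c s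
  generalize v u = v at *
  generalize v1 u = v1 at *
  generalize k u = k at *
  generalize k1 u = k1 at *
  generalize c u = c at *
  generalize s u = s at *
  field_simp
  grind


theorem pu_apply {F : ℝ → ℝ → E2} (h : ContDiff ℝ (⊤ : ℕ∞) (fun p : ℝ × ℝ => F p.1 p.2))
    (i : Fin 2) (u t : ℝ) : CSF.pu F u t i = D1 (fun u t => F u t i) u t := by
  have hd : DifferentiableAt ℝ (fun x => F x t) u :=
    (ContDiff.comp (g := fun p : ℝ × ℝ => F p.1 p.2) h
      (contDiff_id.prodMk contDiff_const)).differentiable (by simp) u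
  exact (((EuclideanSpace.proj (𝕜 := ℝ) i).hasFDerivAt.comp_hasDerivAt u hd.hasDerivAt).deriv).symm

theorem pt_apply {F : ℝ → ℝ → E2} (h : ContDiff ℝ (⊤ : ℕ∞) (fun p : ℝ × ℝ => F p.1 p.2))
    (i : Fin 2) (u t : ℝ) : CSF.pt F u t i = D2 (fun u t => F u t i) u t := by
  have hd : DifferentiableAt ℝ (fun x => F u x) t :=
    (ContDiff.comp (g := fun p : ℝ × ℝ => F p.1 p.2) h
      (contDiff_const.prodMk contDiff_id)).differentiable (by simp) t
  exact (((EuclideanSpace.proj (𝕜 := ℝ) i).hasFDerivAt.comp_hasDerivAt t hd.hasDerivAt).deriv).symm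

theorem sm_apply {F : ℝ → ℝ → E2} (h : ContDiff ℝ (⊤ : ℕ∞) (fun p : ℝ × ℝ => F p.1 p.2))
    (i : Fin 2) : Sm (fun u t => F u t i) := contDiff_euclidean.1 h i

theorem speed_eq {F : ℝ → ℝ → E2} (h : ContDiff ℝ (⊤ : ℕ∞) (fun p : ℝ × ℝ => F p.1 p.2))
    (u t : ℝ) : CSF.speed F u t = V (D1 (fun u t => F u t 0)) (D1 (fun u t => F u t 1)) u t := by
  simp [CSF.speed, EuclideanSpace.norm_eq, V, Fin.sum_univ_two, pu_apply h]

theorem curv_eq {F : ℝ → ℝ → E2} (h : ContDiff ℝ (⊤ : ℕ∞) (fun p : ℝ × ℝ => F p.1 p.2))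
    (u t : ℝ) : CSF.curv F u t = K (D1 (fun u t => F u t 0)) (D1 (fun u t => F u t 1)) u t := by
  have hp := (sm_apply h 0).D1
  have hq := (sm_apply h 1).D1
  have hsp := speed_eq h
  have hpu0 := pu_apply h 0
  have hpu1 := pu_apply h 1
  generalize D1 (fun u t => F u t 0) = p at *
  generalize D1 (fun u t => F u t 1) = q at *
  by_cases h0 : V p q u t = 0
  · simp [CSF.curv, CSF.sderiv, hsp, h0, K]
  have ht : ∀ x t, CSF.tang F x t = !₂[(V p q x t)⁻¹ * p x t, (V p q x t)⁻¹ * q x t] := by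
    intro x t
    ext i
    fin_cases i <;> simp [CSF.tang, hsp, hpu0, hpu1]
  have d0 := ((V1 hp hq h0).inv h0).mul (hp.h1 u t)
  have d1 := ((V1 hp hq h0).inv h0).mul (hq.h1 u t)
  have hd : ∀ A B, HasDerivAt (fun x => (V p q x t)⁻¹ * p x t) A u →
      HasDerivAt (fun x => (V p q x t)⁻¹ * q x t) B u →
      HasDerivAt (fun x => !₂[(V p q x t)⁻¹ * p x t, (V p q x t)⁻¹ * q x t]) !₂[A, B] u := by
    intro A B hA hB
    have hpi : HasDerivAt (fun x => ![(V p q x t)⁻¹ * p x t, (V p q x t)⁻¹ * q x t]) ![A, B] u := by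
      rw [hasDerivAt_pi]
      intro i
      fin_cases i
      · exact hA
      · exact hB
    exact ((EuclideanSpace.equiv (Fin 2) ℝ).symm.hasFDerivAt).comp_hasDerivAt u hpi
  have hd := hd _ _ d0 d1
  simp only [CSF.curv, CSF.sderiv, CSF.nor, hd.deriv, hsp, ht, rot, K]
  simp [PiLp.inner_apply, Fin.sum_univ_two]
  have := V_sq p q u t
  field_simp
  ring

end CSFaux

theorem curvature_evolution (a b T : ℝ) (hab : a < b) (hT : 0 < T)
    (F : ℝ → ℝ → E2) (hF : CSF.IsCSF F a b T) :
    ∀ u ∈ Icc a b, ∀ t ∈ Ico 0 T,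
      deriv (fun x => CSF.curv F u x) t
        = CSF.sderiv F (CSF.sderiv F (CSF.curv F)) u t + (CSF.curv F u t) ^ 3 := by
  intro u hu t ht
  obtain ⟨h, hne, hcsf⟩ := hF
  have hx := CSFaux.sm_apply h 0
  have hy := CSFaux.sm_apply h 1
  have hK : CSF.curv F = CSFaux.K (CSFaux.D1 (fun u t => F u t 0))
    (CSFaux.D1 (fun u t => F u t 1)) := by
    funext u t; exact CSFaux.curv_eq h u t
  have hsp := CSFaux.speed_eq h
  have hc : ∀ u t, CSFaux.D2 (CSFaux.D1 (fun u t => F u t 0)) u t = _ := hx.comm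
  have hc' : ∀ u t, CSFaux.D2 (CSFaux.D1 (fun u t => F u t 1)) u t = _ := hy.comm
  have key := CSFaux.core (t := t) hab hx.D1 hy.D1 hx.D2 hy.D2 ?_ ?_ ?_ (fun u => hc u t)
    (fun u => hc' u t) ?_ ?_ hu
  · simp only [CSF.sderiv, hsp, hK, smul_eq_mul]
    exact key
  · intro w hw h0
    rw [← hsp] at h0
    exact hne w hw t ht (norm_eq_zero.1 h0)
  · intro w hw
    rw [← CSFaux.pt_apply h, hcsf w hw t ht, hK, ← hsp, ← CSFaux.pu_apply h]
    simp [CSF.nor, rot, CSF.tang]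
    try exact Or.inl (mul_comm _ _)
  · intro w hw
    rw [← CSFaux.pt_apply h, hcsf w hw t ht, hK, ← hsp, ← CSFaux.pu_apply h]
    simp [CSF.nor, rot, CSF.tang]
    try exact Or.inl (mul_comm _ _)
  · intro u
    rw [hx.D1.comm]
    congr 1
    funext u t; exact hc u t
  · intro u
    rw [hy.D1.comm]
    congr 1
    funext u t; exact hc' u t
end
end

section
/- Let F : [a,b] × [0,T) → ℝ² be a smooth planar curve shortening flow with nonvanishing speed, satisfying the Dirichlet boundary condition κ(a,t) = κ(b,t) = 0 for all t. Then d/dt ∫_a^b κ² v du = ∫_a^b ( -2(∂_s κ)² + κ⁴ ) v du for every t ∈ (0,T). -/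
open Real MeasureTheory Set Filter

noncomputable section

namespace CSF

section aux

variable {X : Type*} [NormedAddCommGroup X] [NormedSpace ℝ X]

def D1 (f : ℝ → ℝ → X) (u t : ℝ) : X := deriv (fun x => f x t) u

def D2 (f : ℝ → ℝ → X) (u t : ℝ) : X := deriv (fun y => f u y) t

def Sm (U : Set (ℝ × ℝ)) (f : ℝ → ℝ → X) : Prop :=
  ContDiffOn ℝ (⊤ : ℕ∞) (fun p : ℝ × ℝ => f p.1 p.2) U

theorem Sm.diffAt {U : Set (ℝ × ℝ)} {f : ℝ → ℝ → X} (hU : IsOpen U) (h : Sm U f)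
    {p : ℝ × ℝ} (hp : p ∈ U) : DifferentiableAt ℝ (fun p : ℝ × ℝ => f p.1 p.2) p :=
  (h.contDiffAt (hU.mem_nhds hp)).differentiableAt (by simp)

theorem Sm.h1' {U : Set (ℝ × ℝ)} {f : ℝ → ℝ → X} (hU : IsOpen U) (h : Sm U f)
    {u t : ℝ} (hp : (u, t) ∈ U) : HasDerivAt (fun x => f x t)
      (fderiv ℝ (fun p : ℝ × ℝ => f p.1 p.2) (u, t) (1, 0)) u := by
  have h1 := (h.diffAt hU hp).hasFDerivAt
  have h2 : HasDerivAt (fun x : ℝ => (x, t)) ((1 : ℝ), (0 : ℝ)) u :=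
    (hasDerivAt_id u).prodMk (hasDerivAt_const u t)
  exact h1.comp_hasDerivAt u h2

theorem Sm.h2' {U : Set (ℝ × ℝ)} {f : ℝ → ℝ → X} (hU : IsOpen U) (h : Sm U f)
    {u t : ℝ} (hp : (u, t) ∈ U) : HasDerivAt (fun y => f u y)
      (fderiv ℝ (fun p : ℝ × ℝ => f p.1 p.2) (u, t) (0, 1)) t := by
  have h1 := (h.diffAt hU hp).hasFDerivAt
  have h2 : HasDerivAt (fun y : ℝ => (u, y)) ((0 : ℝ), (1 : ℝ)) t :=
    (hasDerivAt_const t u).prodMk (hasDerivAt_id t)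
  exact h1.comp_hasDerivAt t h2

theorem Sm.h1 {U : Set (ℝ × ℝ)} {f : ℝ → ℝ → X} (hU : IsOpen U) (h : Sm U f)
    {u t : ℝ} (hp : (u, t) ∈ U) : HasDerivAt (fun x => f x t) (D1 f u t) u :=
  (h.h1' hU hp).differentiableAt.hasDerivAt

theorem Sm.h2 {U : Set (ℝ × ℝ)} {f : ℝ → ℝ → X} (hU : IsOpen U) (h : Sm U f)
    {u t : ℝ} (hp : (u, t) ∈ U) : HasDerivAt (fun y => f u y) (D2 f u t) t :=
  (h.h2' hU hp).differentiableAt.hasDerivAt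

theorem Sm.fd {U : Set (ℝ × ℝ)} {f : ℝ → ℝ → X} (hU : IsOpen U) (h : Sm U f) :
    ContDiffOn ℝ (⊤ : ℕ∞) (fderiv ℝ (fun p : ℝ × ℝ => f p.1 p.2)) U :=
  ContDiffOn.fderiv_of_isOpen h hU (by simp)

theorem Sm.d1 {U : Set (ℝ × ℝ)} {f : ℝ → ℝ → X} (hU : IsOpen U) (h : Sm U f) :
    Sm U (D1 f) := by
  have h1 := (h.fd hU).clm_apply (contDiffOn_const (c := ((1 : ℝ), (0 : ℝ))))
  exact h1.congr fun p hp => (h.h1' hU hp).deriv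

theorem Sm.d2 {U : Set (ℝ × ℝ)} {f : ℝ → ℝ → X} (hU : IsOpen U) (h : Sm U f) :
    Sm U (D2 f) := by
  have h1 := (h.fd hU).clm_apply (contDiffOn_const (c := ((0 : ℝ), (1 : ℝ))))
  exact h1.congr fun p hp => (h.h2' hU hp).deriv

theorem ev1 {U : Set (ℝ × ℝ)} (hU : IsOpen U) {u t : ℝ} (hp : (u, t) ∈ U) :
    ∀ᶠ x in nhds u, (x, t) ∈ U :=
  (Continuous.prodMk_left t).continuousAt.eventually (hU.mem_nhds hp)

theorem ev2 {U : Set (ℝ × ℝ)} (hU : IsOpen U) {u t : ℝ} (hp : (u, t) ∈ U) :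
    ∀ᶠ y in nhds t, (u, y) ∈ U :=
  (Continuous.prodMk_right u).continuousAt.eventually (hU.mem_nhds hp)

theorem Sm.comm {U : Set (ℝ × ℝ)} {f : ℝ → ℝ → X} (hU : IsOpen U) (h : Sm U f)
    {u t : ℝ} (hp : (u, t) ∈ U) : D2 (D1 f) u t = D1 (D2 f) u t := by
  have hs : IsSymmSndFDerivAt ℝ (fun p : ℝ × ℝ => f p.1 p.2) (u, t) :=
    (h.contDiffAt (hU.mem_nhds hp)).isSymmSndFDerivAt (by
      rw [minSmoothness_of_isRCLikeNormedField]; exact WithTop.coe_le_coe.2 le_top)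
  have hd : DifferentiableAt ℝ (fderiv ℝ (fun p : ℝ × ℝ => f p.1 p.2)) (u, t) :=
    ((h.fd hU).contDiffAt (hU.mem_nhds hp)).differentiableAt (by simp)
  have e1 : HasDerivAt (fun x : ℝ => (x, t)) ((1 : ℝ), (0 : ℝ)) u :=
    (hasDerivAt_id u).prodMk (hasDerivAt_const u t)
  have e2 : HasDerivAt (fun y : ℝ => (u, y)) ((0 : ℝ), (1 : ℝ)) t :=
    (hasDerivAt_const t u).prodMk (hasDerivAt_id t)
  have a1 := (ContinuousLinearMap.apply ℝ X ((0 : ℝ), (1 : ℝ))).hasFDerivAt.comp_hasDerivAt u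
    (hd.hasFDerivAt.comp_hasDerivAt u e1)
  have a2 := (ContinuousLinearMap.apply ℝ X ((1 : ℝ), (0 : ℝ))).hasFDerivAt.comp_hasDerivAt t
    (hd.hasFDerivAt.comp_hasDerivAt t e2)
  have b1 := a1.congr_of_eventuallyEq (f₁ := fun x => D2 f x t) (by
    filter_upwards [ev1 hU hp] with x hx
    exact (h.h2' hU hx).deriv)
  have b2 := a2.congr_of_eventuallyEq (f₁ := fun y => D1 f u y) (by
    filter_upwards [ev2 hU hp] with x hx
    exact (h.h1' hU hx).deriv)
  rw [D1, D2, b1.deriv, b2.deriv]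
  exact hs _ _

theorem Sm.coord {U : Set (ℝ × ℝ)} {f : ℝ → ℝ → E2} (h : Sm U f) (i : Fin 2) :
    Sm U (fun u t => f u t i) :=
  (EuclideanSpace.proj (𝕜 := ℝ) i).contDiff.comp_contDiffOn h

theorem Sm.d1_coord {U : Set (ℝ × ℝ)} {f : ℝ → ℝ → E2} (hU : IsOpen U) (h : Sm U f) (i : Fin 2)
    {u t : ℝ} (hp : (u, t) ∈ U) : D1 (fun u t => f u t i) u t = D1 f u t i :=
  ((EuclideanSpace.proj (𝕜 := ℝ) i).hasFDerivAt.comp_hasDerivAt u (h.h1 hU hp)).deriv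

theorem Sm.d2_coord {U : Set (ℝ × ℝ)} {f : ℝ → ℝ → E2} (hU : IsOpen U) (h : Sm U f) (i : Fin 2)
    {u t : ℝ} (hp : (u, t) ∈ U) : D2 (fun u t => f u t i) u t = D2 f u t i :=
  ((EuclideanSpace.proj (𝕜 := ℝ) i).hasFDerivAt.comp_hasDerivAt t (h.h2 hU hp)).deriv

theorem d1_congr {U : Set (ℝ × ℝ)} {f g : ℝ → ℝ → ℝ} (hU : IsOpen U)
    (h : ∀ u t, (u, t) ∈ U → f u t = g u t) {u t : ℝ} (hp : (u, t) ∈ U) :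
    D1 f u t = D1 g u t :=
  Filter.EventuallyEq.deriv_eq (by
    filter_upwards [ev1 hU hp] with x hx using h _ _ hx)

theorem d2_congr {U : Set (ℝ × ℝ)} {f g : ℝ → ℝ → ℝ} (hU : IsOpen U)
    (h : ∀ u t, (u, t) ∈ U → f u t = g u t) {u t : ℝ} (hp : (u, t) ∈ U) :
    D2 f u t = D2 g u t :=
  Filter.EventuallyEq.deriv_eq (by
    filter_upwards [ev2 hU hp] with x hx using h _ _ hx)

theorem Sm.cont1 {U : Set (ℝ × ℝ)} {f : ℝ → ℝ → X} (h : Sm U f) {a b t : ℝ}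
    (hs : ∀ u ∈ Icc a b, (u, t) ∈ U) : ContinuousOn (fun u => f u t) (Icc a b) :=
  ContinuousOn.comp (t := U) h.continuousOn
    (Continuous.prodMk_left t).continuousOn (fun u hu => hs u hu)

/-- Differentiation under the integral sign. -/
theorem leibniz {U : Set (ℝ × ℝ)} {f : ℝ → ℝ → ℝ} (hU : IsOpen U) (h : Sm U f) {a b T : ℝ}
    (hab : a ≤ b) (hs : ∀ u ∈ Icc a b, ∀ t ∈ Ioo 0 T, (u, t) ∈ U) {t : ℝ} (ht : t ∈ Ioo 0 T) :
    HasDerivAt (fun x => ∫ u in a..b, f u x) (∫ u in a..b, D2 f u t) t := by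
  obtain ⟨ε, hε, hb⟩ := Metric.nhds_basis_closedBall.mem_iff.1 (isOpen_Ioo.mem_nhds ht)
  have hc : IsCompact (Icc a b ×ˢ Metric.closedBall t ε) :=
    isCompact_Icc.prod (isCompact_closedBall t ε)
  have hsub : Icc a b ×ˢ Metric.closedBall t ε ⊆ U := fun p hp => hs _ hp.1 _ (hb hp.2)
  obtain ⟨C, hC⟩ := hc.exists_bound_of_continuousOn ((h.d2 hU).continuousOn.mono hsub)
  have hIoc : uIoc a b ⊆ Icc a b := by rw [uIoc_of_le hab]; exact Ioc_subset_Icc_self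
  have hmeas : ∀ g : ℝ → ℝ → ℝ, Sm U g → ∀ x ∈ Ioo 0 T,
      IntervalIntegrable (fun u => g u x) volume a b := fun g hg x hx =>
    (ContinuousOn.intervalIntegrable (by
      rw [uIcc_of_le hab]; exact hg.cont1 (fun u hu => hs u hu x hx)))
  refine (intervalIntegral.hasDerivAt_integral_of_dominated_loc_of_deriv_le
    (μ := volume) (F := fun x u => f u x) (F' := fun x u => D2 f u x) (bound := fun _ => C)
    (Metric.closedBall_mem_nhds t hε) ?_ (hmeas f h t ht) ?_ ?_ (by simp) ?_).2
  · filter_upwards [isOpen_Ioo.mem_nhds ht] with x hx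
    exact (intervalIntegrable_iff.1 (hmeas f h x hx)).aestronglyMeasurable
  · exact (intervalIntegrable_iff.1 (hmeas _ (h.d2 hU) t ht)).aestronglyMeasurable
  · exact .of_forall fun u hu x hx => hC (u, x) ⟨hIoc hu, hx⟩
  · exact .of_forall fun u hu x hx => h.h2 hU (hs u (hIoc hu) x (hb hx))

end aux

section geom

variable (F : ℝ → ℝ → E2)

def reg : Set (ℝ × ℝ) := {p | pu F p.1 p.2 ≠ 0}

theorem smF (hF : ContDiff ℝ (⊤ : ℕ∞) (fun p : ℝ × ℝ => F p.1 p.2)) (U : Set (ℝ × ℝ)) :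
    Sm U F := hF.contDiffOn

theorem pu_eq : pu F = D1 F := rfl

theorem pt_eq : pt F = D2 F := rfl

variable {F}

theorem reg_open (hF : ContDiff ℝ (⊤ : ℕ∞) (fun p : ℝ × ℝ => F p.1 p.2)) : IsOpen (reg F) := by
  have h : Sm univ (pu F) := (smF F hF univ).d1 isOpen_univ
  have hc : Continuous (fun p : ℝ × ℝ => pu F p.1 p.2) :=
    continuousOn_univ.1 h.continuousOn
  exact isOpen_ne_fun hc continuous_const

theorem sm_pu (hF : ContDiff ℝ (⊤ : ℕ∞) (fun p : ℝ × ℝ => F p.1 p.2)) : Sm (reg F) (pu F) :=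
  (smF F hF _).d1 (reg_open hF)

theorem speed_ne {u t : ℝ} (h : (u, t) ∈ reg F) : speed F u t ≠ 0 := norm_ne_zero_iff.2 h

theorem sm_speed (hF : ContDiff ℝ (⊤ : ℕ∞) (fun p : ℝ × ℝ => F p.1 p.2)) :
    Sm (reg F) (speed F) :=
  ContDiffOn.norm ℝ (sm_pu hF) (fun _ hp => hp)

theorem sm_speed_inv (hF : ContDiff ℝ (⊤ : ℕ∞) (fun p : ℝ × ℝ => F p.1 p.2)) :
    Sm (reg F) (fun u t => (speed F u t)⁻¹) :=
  ContDiffOn.inv (sm_speed hF) (fun _ hp => speed_ne hp)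

theorem sm_tang (hF : ContDiff ℝ (⊤ : ℕ∞) (fun p : ℝ × ℝ => F p.1 p.2)) :
    Sm (reg F) (tang F) :=
  ContDiffOn.smul (sm_speed_inv hF) (sm_pu hF)

variable (F)

def cc (u t : ℝ) : ℝ := tang F u t 0

def ss (u t : ℝ) : ℝ := tang F u t 1

variable {F}

theorem sm_cc (hF : ContDiff ℝ (⊤ : ℕ∞) (fun p : ℝ × ℝ => F p.1 p.2)) :
    Sm (reg F) (cc F) := (sm_tang hF).coord 0

theorem sm_ss (hF : ContDiff ℝ (⊤ : ℕ∞) (fun p : ℝ × ℝ => F p.1 p.2)) :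
    Sm (reg F) (ss F) := (sm_tang hF).coord 1

theorem cs_sq {u t : ℝ} (h : (u, t) ∈ reg F) : cc F u t ^ 2 + ss F u t ^ 2 = 1 := by
  have h1 : ‖tang F u t‖ = 1 := by
    have := speed_ne h
    rw [tang, norm_smul, norm_inv, Real.norm_of_nonneg (by exact norm_nonneg _ : 0 ≤ speed F u t)]
    exact inv_mul_cancel₀ this
  have h2 := EuclideanSpace.norm_sq_eq (tang F u t)
  rw [h1] at h2
  simp only [Fin.sum_univ_two, Real.norm_eq_abs, sq_abs] at h2
  simp only [cc, ss]; linarith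

theorem curv_eq (hF : ContDiff ℝ (⊤ : ℕ∞) (fun p : ℝ × ℝ => F p.1 p.2)) {u t : ℝ}
    (h : (u, t) ∈ reg F) : curv F u t =
      (speed F u t)⁻¹ * (cc F u t * D1 (ss F) u t - ss F u t * D1 (cc F) u t) := by
  have h0 : D1 (cc F) u t = D1 (tang F) u t 0 := (sm_tang hF).d1_coord (reg_open hF) 0 h
  have h1 : D1 (ss F) u t = D1 (tang F) u t 1 := (sm_tang hF).d1_coord (reg_open hF) 1 h
  rw [h0, h1]
  have e : sderiv F (tang F) u t = (speed F u t)⁻¹ • D1 (tang F) u t := rfl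
  rw [curv, e]
  simp [PiLp.inner_apply, Fin.sum_univ_two, nor, rot, cc, ss]
  ring

theorem sm_curv (hF : ContDiff ℝ (⊤ : ℕ∞) (fun p : ℝ × ℝ => F p.1 p.2)) :
    Sm (reg F) (curv F) := by
  have hU := reg_open hF
  have h := ContDiffOn.mul (sm_speed_inv hF) (ContDiffOn.sub
    (ContDiffOn.mul (sm_cc hF) ((sm_ss hF).d1 hU)) (ContDiffOn.mul (sm_ss hF) ((sm_cc hF).d1 hU)))
  exact h.congr fun p hp => curv_eq hF hp

theorem sm_sd (hF : ContDiff ℝ (⊤ : ℕ∞) (fun p : ℝ × ℝ => F p.1 p.2)) :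
    Sm (reg F) (sderiv F (curv F)) :=
  ContDiffOn.smul (sm_speed_inv hF) ((sm_curv hF).d1 (reg_open hF))

theorem cs_orth (hF : ContDiff ℝ (⊤ : ℕ∞) (fun p : ℝ × ℝ => F p.1 p.2)) {u t : ℝ}
    (h : (u, t) ∈ reg F) : cc F u t * D1 (cc F) u t + ss F u t * D1 (ss F) u t = 0 := by
  have hU := reg_open hF
  have h1 := (((sm_cc hF).h1 hU h).pow 2).add (((sm_ss hF).h1 hU h).pow 2)
  have h2 := h1.unique ((hasDerivAt_const u (1 : ℝ)).congr_of_eventuallyEq (by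
    filter_upwards [ev1 hU h] with x hx using cs_sq hx))
  simp at h2
  linarith

theorem cc_u (hF : ContDiff ℝ (⊤ : ℕ∞) (fun p : ℝ × ℝ => F p.1 p.2)) {u t : ℝ}
    (h : (u, t) ∈ reg F) : D1 (cc F) u t = - (curv F u t * speed F u t * ss F u t) := by
  have hv := speed_ne h
  have h1 := cs_sq h
  have h2 := cs_orth hF h
  rw [curv_eq hF h]
  field_simp
  linear_combination (-D1 (cc F) u t) * h1 + cc F u t * h2

theorem ss_u (hF : ContDiff ℝ (⊤ : ℕ∞) (fun p : ℝ × ℝ => F p.1 p.2)) {u t : ℝ}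
    (h : (u, t) ∈ reg F) : D1 (ss F) u t = curv F u t * speed F u t * cc F u t := by
  have hv := speed_ne h
  have h1 := cs_sq h
  have h2 := cs_orth hF h
  rw [curv_eq hF h]
  field_simp
  linear_combination (-D1 (ss F) u t) * h1 + ss F u t * h2

theorem sd_eq {u t : ℝ} (h : (u, t) ∈ reg F) :
    D1 (curv F) u t = speed F u t * sderiv F (curv F) u t := by
  have hv := speed_ne h
  have e : sderiv F (curv F) u t = (speed F u t)⁻¹ * D1 (curv F) u t := rfl
  rw [e]; field_simp

theorem pu_coord {u t : ℝ} (h : (u, t) ∈ reg F) (i : Fin 2) :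
    pu F u t i = speed F u t * tang F u t i := by
  have hv := speed_ne h
  simp [tang]; field_simp

/-- Time derivatives, in an open set `W` where the flow equation holds. -/
theorem evol (hF : ContDiff ℝ (⊤ : ℕ∞) (fun p : ℝ × ℝ => F p.1 p.2)) {W : Set (ℝ × ℝ)}
    (hW : IsOpen W) (hWU : W ⊆ reg F)
    (hfl : ∀ u t, (u, t) ∈ W → pt F u t = curv F u t • nor F u t) {u t : ℝ} (h : (u, t) ∈ W) :
    D2 (speed F) u t = - curv F u t ^ 2 * speed F u t ∧
    D2 (cc F) u t = - (sderiv F (curv F) u t * ss F u t) ∧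
    D2 (ss F) u t = sderiv F (curv F) u t * cc F u t := by
  have hU := reg_open hF
  have hp := hWU h
  have hv := speed_ne hp
  have hk := (sm_curv hF).h1 hU hp
  have hcu := (sm_cc hF).h1 hU hp
  have hsu := (sm_ss hF).h1 hU hp
  have hct := (sm_cc hF).h2 hU hp
  have hst := (sm_ss hF).h2 hU hp
  have hvt := (sm_speed hF).h2 hU hp
  have key : ∀ i, D2 (fun u t => pu F u t i) u t = D1 (fun u t => pt F u t i) u t := fun i => by
    rw [(sm_pu hF).d2_coord hU i hp]
    have h2 : Sm (reg F) (pt F) := (smF F hF _).d2 hU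
    rw [h2.d1_coord hU i hp]
    rw [pu_eq, pt_eq, (smF F hF _).comm hU hp]
  have ptx : ∀ u t, (u, t) ∈ W → pt F u t 0 = curv F u t * (- ss F u t) := fun u t h => by
    rw [hfl u t h]; simp [nor, rot, ss]
  have pty : ∀ u t, (u, t) ∈ W → pt F u t 1 = curv F u t * cc F u t := fun u t h => by
    rw [hfl u t h]; simp [nor, rot, cc]
  have kx := key 0
  have ky := key 1
  rw [d1_congr hW ptx h, d2_congr hU (fun u t h => pu_coord h 0) hp] at kx
  rw [d1_congr hW pty h, d2_congr hU (fun u t h => pu_coord h 1) hp] at ky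
  have ax : D2 (fun u t => speed F u t * tang F u t 0) u t = _ := (hvt.mul hct).deriv
  have ay : D2 (fun u t => speed F u t * tang F u t 1) u t = _ := (hvt.mul hst).deriv
  have bx : D1 (fun u t => curv F u t * (- ss F u t)) u t = _ := (hk.mul hsu.neg).deriv
  have bY : D1 (fun u t => curv F u t * (cc F u t)) u t = _ := (hk.mul hcu).deriv
  rw [ax, bx, sd_eq hp, ss_u hF hp] at kx
  simp only [Pi.neg_apply] at kx
  rw [ay, bY, sd_eq hp, cc_u hF hp] at ky
  have h1 := cs_sq hp
  have h2 : cc F u t * D2 (cc F) u t + ss F u t * D2 (ss F) u t = 0 := by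
    have h1 := (hct.pow 2).add (hst.pow 2)
    have h2 := h1.unique ((hasDerivAt_const t (1 : ℝ)).congr_of_eventuallyEq (by
      filter_upwards [ev2 hU hp] with x hx using cs_sq hx))
    simp at h2
    linarith
  have e1 : D2 (speed F) u t = - curv F u t ^ 2 * speed F u t := by
    linear_combination cc F u t * kx + ss F u t * ky -
      (D2 (speed F) u t + curv F u t ^ 2 * speed F u t) * h1 - speed F u t * h2
  rw [e1] at kx ky
  refine ⟨e1, mul_left_cancel₀ hv ?_, mul_left_cancel₀ hv ?_⟩
  · linear_combination kx
  · linear_combination ky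

theorem evol_w (hF : ContDiff ℝ (⊤ : ℕ∞) (fun p : ℝ × ℝ => F p.1 p.2)) {W : Set (ℝ × ℝ)}
    (hW : IsOpen W) (hWU : W ⊆ reg F)
    (hfl : ∀ u t, (u, t) ∈ W → pt F u t = curv F u t • nor F u t) {u t : ℝ} (h : (u, t) ∈ W) :
    D2 (fun u t => curv F u t * speed F u t) u t = D1 (sderiv F (curv F)) u t := by
  have hU := reg_open hF
  have hp := hWU h
  have hd := (sm_sd hF).h1 hU hp
  have hcu := (sm_cc hF).h1 hU hp
  have hsu := (sm_ss hF).h1 hU hp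
  have hct := (sm_cc hF).h2 hU hp
  have hst := (sm_ss hF).h2 hU hp
  have hcut := ((sm_cc hF).d1 hU).h2 hU hp
  have hsut := ((sm_ss hF).d1 hU).h2 hU hp
  have e : ∀ u t, (u, t) ∈ reg F → curv F u t * speed F u t =
      cc F u t * D1 (ss F) u t - ss F u t * D1 (cc F) u t := fun u t h => by
    have hv := speed_ne h
    rw [curv_eq hF h]; field_simp
  have a : D2 (fun u t => cc F u t * D1 (ss F) u t - ss F u t * D1 (cc F) u t) u t = _ :=
    ((hct.mul hsut).sub (hst.mul hcut)).deriv
  obtain ⟨-, ec, es⟩ := evol hF hW hWU hfl h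
  have c1 : D1 (D2 (cc F)) u t = _ :=
    (d1_congr hW (fun u t h => (evol hF hW hWU hfl h).2.1) h).trans (hd.mul hsu).neg.deriv
  have c2 : D1 (D2 (ss F)) u t = _ :=
    (d1_congr hW (fun u t h => (evol hF hW hWU hfl h).2.2) h).trans (hd.mul hcu).deriv
  rw [d2_congr hU e hp, a, (sm_cc hF).comm hU hp, (sm_ss hF).comm hU hp, c1, c2, ec, es,
    cc_u hF hp, ss_u hF hp]
  have h1 := cs_sq hp
  linear_combination D1 (sderiv F (curv F)) u t * h1

theorem evol_main (hF : ContDiff ℝ (⊤ : ℕ∞) (fun p : ℝ × ℝ => F p.1 p.2)) {W : Set (ℝ × ℝ)}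
    (hW : IsOpen W) (hWU : W ⊆ reg F)
    (hfl : ∀ u t, (u, t) ∈ W → pt F u t = curv F u t • nor F u t) {u t : ℝ} (h : (u, t) ∈ W) :
    D2 (fun u t => curv F u t ^ 2 * speed F u t) u t =
      2 * (curv F u t * D1 (sderiv F (curv F)) u t) + curv F u t ^ 4 * speed F u t := by
  have hU := reg_open hF
  have hp := hWU h
  have hkt := (sm_curv hF).h2 hU hp
  have hvt := (sm_speed hF).h2 hU hp
  have a : D2 (fun u t => curv F u t ^ 2 * speed F u t) u t = _ := ((hkt.pow 2).mul hvt).deriv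
  have b : D2 (fun u t => curv F u t * speed F u t) u t = _ := (hkt.mul hvt).deriv
  rw [evol_w hF hW hWU hfl h] at b
  obtain ⟨ev, -, -⟩ := evol hF hW hWU hfl h
  rw [a, b, ev]
  push_cast
  simp only [Pi.pow_apply]
  ring

end geom

end CSF

/-- with Dirichlet boundary conditions (κ = 0 at the endpoints),
d/dt ∫ₐᵇ κ² v du = ∫ₐᵇ (-2(∂ₛκ)² + κ⁴) v du for every t ∈ (0,T). -/
theorem L2_curvature_evolution (a b T : ℝ) (hab : a < b) (hT : 0 < T)
    (F : ℝ → ℝ → E2) (hF : CSF.IsCSF F a b T)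
    (hbc : ∀ t ∈ Ico 0 T, CSF.curv F a t = 0 ∧ CSF.curv F b t = 0) :
    ∀ t ∈ Ioo 0 T,
      HasDerivAt (fun x => ∫ u in a..b, (CSF.curv F u x) ^ 2 * CSF.speed F u x)
        (∫ u in a..b,
          (-2 * (CSF.sderiv F (CSF.curv F) u t) ^ 2 + (CSF.curv F u t) ^ 4)
            * CSF.speed F u t) t := by
  intro t ht
  obtain ⟨hS, hne, hfl⟩ := hF
  have hU := CSF.reg_open hS
  have hW : IsOpen (Ioo a b ×ˢ Ioo 0 T) := isOpen_Ioo.prod isOpen_Ioo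
  have hreg : ∀ u ∈ Icc a b, ∀ t ∈ Ioo 0 T, (u, t) ∈ CSF.reg F := fun u hu t ht =>
    hne u hu t (Ioo_subset_Ico_self ht)
  have hWU : Ioo a b ×ˢ Ioo 0 T ⊆ CSF.reg F := fun p hp =>
    hreg p.1 (Ioo_subset_Icc_self hp.1) p.2 hp.2
  have hfl' : ∀ u t, (u, t) ∈ Ioo a b ×ˢ Ioo 0 T →
      CSF.pt F u t = CSF.curv F u t • CSF.nor F u t := fun u t h =>
    hfl u (Ioo_subset_Icc_self h.1) t (Ioo_subset_Ico_self h.2)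
  have hsm : CSF.Sm (CSF.reg F) (fun u t => CSF.curv F u t ^ 2 * CSF.speed F u t) :=
    ContDiffOn.mul (ContDiffOn.pow (CSF.sm_curv hS) 2) (CSF.sm_speed hS)
  have hL := CSF.leibniz hU hsm hab.le hreg ht
  have hregt : ∀ u ∈ Icc a b, (u, t) ∈ CSF.reg F := fun u hu => hreg u hu t ht
  have ii : ∀ g : ℝ → ℝ → ℝ, CSF.Sm (CSF.reg F) g →
      IntervalIntegrable (fun u => g u t) volume a b := fun g hg =>
    ContinuousOn.intervalIntegrable (by rw [uIcc_of_le hab.le]; exact hg.cont1 hregt)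
  have hk := CSF.sm_curv hS
  have hd := CSF.sm_sd hS
  have hv := CSF.sm_speed hS
  have ibp := intervalIntegral.integral_mul_deriv_eq_deriv_mul (a := a) (b := b)
    (u := fun u => CSF.curv F u t) (v := fun u => CSF.sderiv F (CSF.curv F) u t)
    (u' := fun u => CSF.D1 (CSF.curv F) u t)
    (v' := fun u => CSF.D1 (CSF.sderiv F (CSF.curv F)) u t)
    (fun u hu => hk.h1 hU (hregt u (by rwa [uIcc_of_le hab.le] at hu)))
    (fun u hu => hd.h1 hU (hregt u (by rwa [uIcc_of_le hab.le] at hu)))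
    (ii _ (hk.d1 hU)) (ii _ (hd.d1 hU))
  obtain ⟨ka, kb⟩ := hbc t (Ioo_subset_Ico_self ht)
  simp only [ka, kb, zero_mul, sub_zero, zero_sub] at ibp
  convert hL using 1
  have i1 : IntervalIntegrable (fun u => 2 * (CSF.curv F u t *
      CSF.D1 (CSF.sderiv F (CSF.curv F)) u t)) volume a b :=
    (ii (fun u t => CSF.curv F u t * CSF.D1 (CSF.sderiv F (CSF.curv F)) u t)
      (ContDiffOn.mul hk (hd.d1 hU))).const_mul 2
  have i2 : IntervalIntegrable (fun u => CSF.curv F u t ^ 4 * CSF.speed F u t) volume a b :=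
    ii (fun u t => CSF.curv F u t ^ 4 * CSF.speed F u t) (ContDiffOn.mul (ContDiffOn.pow hk 4) hv)
  have i3 : IntervalIntegrable (fun u => -2 * (CSF.D1 (CSF.curv F) u t *
      CSF.sderiv F (CSF.curv F) u t)) volume a b :=
    (ii (fun u t => CSF.D1 (CSF.curv F) u t * CSF.sderiv F (CSF.curv F) u t)
      (ContDiffOn.mul (hk.d1 hU) hd)).const_mul (-2)
  have r : ∫ u in a..b, CSF.D2 (fun u t => CSF.curv F u t ^ 2 * CSF.speed F u t) u t =
      ∫ u in a..b, (2 * (CSF.curv F u t * CSF.D1 (CSF.sderiv F (CSF.curv F)) u t) +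
        CSF.curv F u t ^ 4 * CSF.speed F u t) := by
    rw [intervalIntegral.integral_of_le hab.le, intervalIntegral.integral_of_le hab.le,
      integral_Ioc_eq_integral_Ioo, integral_Ioc_eq_integral_Ioo]
    exact setIntegral_congr_fun measurableSet_Ioo fun u hu =>
      CSF.evol_main hS hW hWU hfl' ⟨hu, ht⟩
  have l : ∫ u in a..b, (-2 * (CSF.sderiv F (CSF.curv F) u t) ^ 2 + (CSF.curv F u t) ^ 4)
            * CSF.speed F u t =
      ∫ u in a..b, (-2 * (CSF.D1 (CSF.curv F) u t * CSF.sderiv F (CSF.curv F) u t) +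
        CSF.curv F u t ^ 4 * CSF.speed F u t) := by
    refine intervalIntegral.integral_congr fun u hu => ?_
    rw [uIcc_of_le hab.le] at hu
    simp only [CSF.sd_eq (hregt u hu)]
    ring
  rw [r, l, intervalIntegral.integral_add i1 i2, intervalIntegral.integral_add i3 i2,
    intervalIntegral.integral_const_mul, intervalIntegral.integral_const_mul, ibp]
  ring
end
end

section
/- Let γ : (-π/2, π/2) → ℝ² be the grim reaper curve γ(x) = (x, -log(cos x)). For 0 < a < π/2 let D(a) = ‖γ(a) - γ(-a)‖ be the chord (extrinsic) distance and L(a) = ∫_{-a}^{a} ‖γ′(x)‖ dx the arclength (intrinsic) distance between the points γ(-a) and γ(a). Then D(a)/L(a) → 0 as a → π/2⁻. In particular, no positive lower bound θ > 0 for the ratio D/L holds along the grim reaper. -/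
open Real MeasureTheory Set Filter

noncomputable section

/-- along the grim reaper curve γ(x) = (x, -log cos x), the ratio D/L of the
chord distance D(a) = ‖γ(a) - γ(-a)‖ to the arclength L(a) = ∫₋ₐᵃ ‖γ′‖ tends to 0 as a → π/2⁻;
in particular no positive lower bound θ > 0 for D/L holds along the grim reaper. -/
theorem grim_reaper_ratio_tendsto_zero (γ : ℝ → E2)
    (hγ : ∀ x, γ x = ![x, -Real.log (Real.cos x)])
    (D L : ℝ → ℝ)
    (hD : ∀ a, D a = ‖γ a - γ (-a)‖)
    (hL : ∀ a, L a = ∫ x in (-a)..a, ‖deriv γ x‖) :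
    Tendsto (fun a => D a / L a) (nhdsWithin (π / 2) (Iio (π / 2))) (nhds 0) ∧
    ¬ ∃ θ : ℝ, 0 < θ ∧ ∀ a ∈ Ioo 0 (π / 2), θ ≤ D a / L a := by
  have h0 : ∀ x, (γ x) 0 = x := fun x => by rw [hγ]; rfl
  have h1 : ∀ x, (γ x) 1 = -Real.log (Real.cos x) := fun x => by rw [hγ]; rfl
  have hγ' : γ = fun x => WithLp.toLp 2 ![x, -Real.log (Real.cos x)] := by
    funext x
    ext i
    fin_cases i
    · exact h0 x
    · exact h1 x
  have hDa : ∀ a, 0 < a → D a = 2 * a := by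
    intro a ha
    rw [hD, EuclideanSpace.norm_eq, Fin.sum_univ_two]
    simp only [PiLp.sub_apply, h0, h1, Real.cos_neg]
    simp only [sub_neg_eq_add, sub_self, norm_zero, Real.norm_eq_abs, sq_abs]
    rw [show (a + a)^2 + 0^2 = (2*a)^2 by ring, Real.sqrt_sq (by linarith)]
  have hder : ∀ x ∈ Ioo (-(π/2)) (π/2), ‖deriv γ x‖ = (Real.cos x)⁻¹ := by
    intro x hx
    have hc : 0 < Real.cos x := Real.cos_pos_of_mem_Ioo hx
    have hd : HasDerivAt γ (WithLp.toLp 2 ![1, Real.sin x / Real.cos x]) x := by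
      have hf : HasDerivAt (fun x : ℝ => (![x, -Real.log (Real.cos x)] : Fin 2 → ℝ))
          ![1, Real.sin x / Real.cos x] x := by
        rw [hasDerivAt_pi]
        intro i
        fin_cases i
        · exact hasDerivAt_id x
        · have := ((Real.hasDerivAt_cos x).log hc.ne').neg
          simp only [neg_div, neg_neg] at this
          exact this
      rw [hγ']
      exact (PiLp.continuousLinearEquiv 2 ℝ (fun _ : Fin 2 => ℝ)).symm.hasFDerivAt.comp_hasDerivAt x hf
    rw [hd.deriv, EuclideanSpace.norm_eq, Fin.sum_univ_two]
    simp only [Real.norm_eq_abs, sq_abs, Matrix.cons_val_zero, Matrix.cons_val_one]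
    rw [← Real.sqrt_sq (inv_nonneg.2 hc.le)]
    congr 1
    field_simp
    nlinarith [Real.sin_sq_add_cos_sq x]
  have hLa : ∀ a ∈ Ioo 0 (π/2), L a = Real.log (1 + Real.sin a) - Real.log (1 - Real.sin a) := by
    intro a ha
    have hsub : ∀ x ∈ uIcc (-a) a, x ∈ Ioo (-(π/2)) (π/2) := by
      intro x hx
      rw [uIcc_of_le (by linarith [ha.1])] at hx
      exact ⟨by linarith [hx.1, ha.2], by linarith [hx.2, ha.2]⟩
    rw [hL, intervalIntegral.integral_congr (g := fun x => (Real.cos x)⁻¹)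
      (fun x hx => hder x (hsub x hx))]
    rw [intervalIntegral.integral_eq_sub_of_hasDerivAt
      (f := fun x => (Real.log (1 + Real.sin x) - Real.log (1 - Real.sin x)) / 2)]
    · simp only [Real.sin_neg]
      rw [← sub_eq_add_neg, sub_neg_eq_add]
      ring
    · intro x hx
      have hc : 0 < Real.cos x := Real.cos_pos_of_mem_Ioo (hsub x hx)
      have hs := Real.sin_sq_add_cos_sq x
      have hp : 0 < 1 + Real.sin x := by nlinarith
      have hm : 0 < 1 - Real.sin x := by nlinarith
      have e := ((((Real.hasDerivAt_sin x).const_add 1).log hp.ne').sub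
        (((Real.hasDerivAt_sin x).const_sub 1).log hm.ne')).div_const 2
      refine e.congr_deriv ?_
      field_simp
      linear_combination 2 * hs
    · apply ContinuousOn.intervalIntegrable
      exact Real.continuous_cos.continuousOn.inv₀
        (fun x hx => (Real.cos_pos_of_mem_Ioo (hsub x hx)).ne')
  have hev : ∀ᶠ a in nhdsWithin (π / 2) (Iio (π / 2)), a ∈ Ioo 0 (π/2) :=
    Ioo_mem_nhdsLT (by positivity)
  have hid : Tendsto (fun a : ℝ => a) (nhdsWithin (π / 2) (Iio (π / 2))) (nhds (π/2)) :=
    tendsto_id.mono_left nhdsWithin_le_nhds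
  have hsin : Tendsto Real.sin (nhdsWithin (π / 2) (Iio (π / 2))) (nhds 1) := by
    have := (Real.continuous_sin.tendsto (π/2)).comp hid
    rwa [Real.sin_pi_div_two] at this
  have hlim : Tendsto (fun a => D a / L a) (nhdsWithin (π / 2) (Iio (π / 2))) (nhds 0) := by
    have hA : Tendsto (fun a => Real.log (1 + Real.sin a)) (nhdsWithin (π / 2) (Iio (π / 2)))
        (nhds (Real.log (1 + 1))) := (hsin.const_add 1).log (by norm_num)
    have hB : Tendsto (fun a => Real.log (1 - Real.sin a)) (nhdsWithin (π / 2) (Iio (π / 2)))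
        atBot := by
      apply Real.tendsto_log_nhdsGT_zero.comp
      rw [tendsto_nhdsWithin_iff]
      refine ⟨by simpa using hsin.const_sub 1, ?_⟩
      filter_upwards [hev] with a ha
      have hc : 0 < Real.cos a := Real.cos_pos_of_mem_Ioo ⟨by linarith [ha.1, ha.2], ha.2⟩
      have hs := Real.sin_sq_add_cos_sq a
      show 0 < 1 - Real.sin a
      nlinarith
    have hC := hA.add_atTop (tendsto_neg_atBot_atTop.comp hB)
    refine ((hid.const_mul 2).div_atTop hC).congr' ?_
    filter_upwards [hev] with a ha
    rw [hDa a ha.1, hLa a ha, sub_eq_add_neg]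
    rfl
  refine ⟨hlim, ?_⟩
  rintro ⟨θ, hθ, h⟩
  have : θ ≤ 0 := ge_of_tendsto hlim (hev.mono h)
  linarith
end
end

section
/- Let F : [a,b] → ℝ² be a C¹ regular curve (F′(u) ≠ 0 for all u). For p ≤ q define the extrinsic distance D(p,q) = ‖F(q) - F(p)‖ and the intrinsic distance L(p,q) = ∫_p^q ‖F′(u)‖ du. Suppose the ratio D/L attains a local minimum at an interior point (p,q) with a < p < q < b and F(p) ≠ F(q). Then, with T = F′/‖F′‖ the unit tangent and W = (F(q) - F(p))/D(p,q) the unit chord direction, one has ⟨T(p), W⟩ = ⟨T(q), W⟩ = D(p,q)/L(p,q). -/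
open Real MeasureTheory Set Filter

noncomputable section

theorem aux_min (G : ℝ → E2) (G' : E2) (l : ℝ → ℝ) (l' x : ℝ)
    (hG : HasDerivAt G G' x) (h0 : G x ≠ 0) (hl : HasDerivAt l l' x) (hl0 : l x ≠ 0)
    (hmin : IsLocalMin (fun t => ‖G t‖ / l t) x) :
    inner ℝ (G x) G' * l x = ‖G x‖ ^ 2 * l' := by
  have hn : ‖G x‖ ≠ 0 := norm_ne_zero_iff.mpr h0
  have h1 := hG.norm_sq.sqrt (pow_ne_zero 2 hn)
  simp only [Real.sqrt_sq (norm_nonneg _)] at h1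
  have h2 := hmin.hasDerivAt_eq_zero (h1.div hl hl0)
  field_simp at h2
  linarith

/-- if the ratio D/L of extrinsic to intrinsic distance along a C¹ regular
curve attains a local minimum at an interior point (p,q) with F(p) ≠ F(q), then
⟨T(p), W⟩ = ⟨T(q), W⟩ = D(p,q)/L(p,q), where T is the unit tangent and W the unit chord
direction. -/
theorem tangent_chord_at_min (a b : ℝ) (hab : a < b) (F F' : ℝ → E2)
    (hderiv : ∀ u ∈ Icc a b, HasDerivAt F (F' u) u)
    (hcont : ContinuousOn F' (Icc a b))
    (hreg : ∀ u ∈ Icc a b, F' u ≠ 0)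
    (D L : ℝ → ℝ → ℝ)
    (hD : ∀ p q, D p q = ‖F q - F p‖)
    (hL : ∀ p q, L p q = ∫ u in p..q, ‖F' u‖)
    (p q : ℝ) (hap : a < p) (hpq : p < q) (hqb : q < b) (hne : F p ≠ F q)
    (hmin : IsLocalMin (fun z : ℝ × ℝ => D z.1 z.2 / L z.1 z.2) (p, q)) :
    inner (𝕜 := ℝ) (‖F' p‖⁻¹ • F' p) ((D p q)⁻¹ • (F q - F p)) = D p q / L p q ∧
    inner (𝕜 := ℝ) (‖F' q‖⁻¹ • F' q) ((D p q)⁻¹ • (F q - F p)) = D p q / L p q := by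
  have hp : p ∈ Icc a b := ⟨hap.le, (hpq.trans hqb).le⟩
  have hq : q ∈ Icc a b := ⟨(hap.trans hpq).le, hqb.le⟩
  have hc : ContinuousOn (fun u => ‖F' u‖) (Icc a b) := hcont.norm
  have hsub : Icc p q ⊆ Icc a b := Icc_subset_Icc hap.le hqb.le
  have hint : IntervalIntegrable (fun u => ‖F' u‖) volume p q := by
    apply ContinuousOn.intervalIntegrable
    rw [uIcc_of_le hpq.le]
    exact hc.mono hsub
  have hcI : ContinuousOn (fun u => ‖F' u‖) (Ioo a b) := hc.mono Ioo_subset_Icc_self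
  have hpI : p ∈ Ioo a b := ⟨hap, hpq.trans hqb⟩
  have hqI : q ∈ Ioo a b := ⟨hap.trans hpq, hqb⟩
  have hdq : HasDerivAt (fun t => ∫ u in p..t, ‖F' u‖) ‖F' q‖ q :=
    intervalIntegral.integral_hasDerivAt_right hint
      (hcI.stronglyMeasurableAtFilter isOpen_Ioo q hqI)
      (hcI.continuousAt (isOpen_Ioo.mem_nhds hqI))
  have hdp : HasDerivAt (fun t => ∫ u in t..q, ‖F' u‖) (-‖F' p‖) p :=
    intervalIntegral.integral_hasDerivAt_left hint
      (hcI.stronglyMeasurableAtFilter isOpen_Ioo p hpI)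
      (hcI.continuousAt (isOpen_Ioo.mem_nhds hpI))
  have hpos : 0 < ∫ u in p..q, ‖F' u‖ :=
    intervalIntegral.intervalIntegral_pos_of_pos_on hint
      (fun x hx => norm_pos_iff.mpr (hreg x (hsub (Ioo_subset_Icc_self hx)))) hpq
  have hG0 : F q - F p ≠ 0 := sub_ne_zero.mpr hne.symm
  simp only [hD, hL] at hmin ⊢
  have hmq : IsLocalMin (fun t => ‖F t - F p‖ / ∫ u in p..t, ‖F' u‖) q := by
    have hcq : Tendsto (fun t : ℝ => (p, t)) (nhds q) (nhds (p, q)) :=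
      Continuous.tendsto (by fun_prop) q
    exact hcq.eventually hmin
  have hmp : IsLocalMin (fun t => ‖F q - F t‖ / ∫ u in t..q, ‖F' u‖) p := by
    have hcp : Tendsto (fun t : ℝ => (t, q)) (nhds p) (nhds (p, q)) :=
      Continuous.tendsto (by fun_prop) p
    exact hcp.eventually hmin
  have e1 := aux_min (fun t => F q - F t) _ _ _ p ((hderiv p hp).const_sub (F q)) hG0 hdp hpos.ne' hmp
  have e2 := aux_min (fun t => F t - F p) _ _ _ q ((hderiv q hq).sub_const (F p)) hG0 hdq hpos.ne' hmq
  have n0 : ‖F q - F p‖ ≠ 0 := norm_ne_zero_iff.mpr hG0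
  have np : ‖F' p‖ ≠ 0 := norm_ne_zero_iff.mpr (hreg p hp)
  have nq : ‖F' q‖ ≠ 0 := norm_ne_zero_iff.mpr (hreg q hq)
  have l0 := hpos.ne'
  simp only [inner_neg_right] at e1
  rw [real_inner_comm] at e1 e2
  simp only [real_inner_smul_left, real_inner_smul_right]
  generalize (∫ u in p..q, ‖F' u‖) = l at *
  constructor
  · field_simp
    linarith
  · field_simp
    linarith
end
end

section
/- (Interior estimate for the distance ratio) Let F : [a,b] × [0,T) → ℝ² be a smooth embedded planar curve shortening flow with nonvanishing speed. For p ≤ q define D(p,q;t) = ‖F(q,t) - F(p,t)‖ and L(p,q;t) = ∫_p^q ‖∂_u F(u,t)‖ du. Suppose at some time t̂ ∈ (0,T) the function (p,q) ↦ (D/L)(p,q;t̂) attains a local minimum at a point (p,q) with a < p < q < b and F(p,t̂) ≠ F(q,t̂). Then d/dt [ (D/L)(p,q;t) ] at t = t̂ is ≥ 0. -/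
open Real MeasureTheory Set Filter

noncomputable section

lemma second_nec (h h' : ℝ → ℝ) (c : ℝ) (h1 : ∀ x, HasDerivAt h (h' x) x)
    (h2 : HasDerivAt h' c 0) (hm : IsLocalMin h 0) : h' 0 = 0 ∧ 0 ≤ c := by
  have e : deriv h = h' := funext fun x => (h1 x).deriv
  have z : h' 0 = 0 := hm.hasDerivAt_eq_zero (h1 0)
  refine ⟨z, ?_⟩
  by_contra hc
  push Not at hc
  have hM : IsLocalMax h 0 := by
    apply isLocalMax_of_deriv_deriv_neg
    · rw [e, h2.deriv]; exact hc
    · rw [e, z]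
    · exact (h1 0).continuousAt
  have hev : h =ᶠ[nhds 0] fun _ => h 0 := by
    filter_upwards [hm, hM] with x a b using le_antisymm b a
  have h3 : deriv h =ᶠ[nhds 0] deriv (fun _ : ℝ => h 0) := hev.deriv
  have h4 : h' =ᶠ[nhds 0] fun _ => (0:ℝ) := by
    rw [e] at h3; simpa using h3
  have := (h2.congr_of_eventuallyEq h4.symm).unique (hasDerivAt_const (0:ℝ) (0:ℝ))
  linarith

lemma e2_inner (x y : E2) : inner ℝ x y = x 0 * y 0 + x 1 * y 1 := by
  simp [PiLp.inner_apply, Fin.sum_univ_two]; ring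

lemma e2_norm_sq (x : E2) : ‖x‖ ^ 2 = x 0 ^ 2 + x 1 ^ 2 := by
  rw [← real_inner_self_eq_norm_sq, e2_inner]; ring

lemma plane_fact (w e f : E2) (r : ℝ) (hw : ‖w‖ = 1) (he : ‖e‖ = 1) (hf : ‖f‖ = 1)
    (h1 : inner ℝ w e = r) (h2 : inner ℝ w f = r) :
    ‖f - e‖ ^ 2 = 0 ∨ ‖f + e‖ ^ 2 = 4 * r ^ 2 := by
  have hw' : w 0 ^ 2 + w 1 ^ 2 = 1 := by rw [← e2_norm_sq, hw]; norm_num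
  have he' : e 0 ^ 2 + e 1 ^ 2 = 1 := by rw [← e2_norm_sq, he]; norm_num
  have hf' : f 0 ^ 2 + f 1 ^ 2 = 1 := by rw [← e2_norm_sq, hf]; norm_num
  rw [e2_inner] at h1 h2
  have k : ∀ x y : ℝ, x ^ 2 + y ^ 2 = (w 0 * x + w 1 * y) ^ 2 + (w 0 * y - w 1 * x) ^ 2 := by
    intro x y
    linear_combination (-(x ^ 2 + y ^ 2)) * hw'
  have ke := k (e 0) (e 1)
  have kf := k (f 0) (f 1)
  rw [he', h1] at ke
  rw [hf', h2] at kf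
  have : (w 0 * f 1 - w 1 * f 0) ^ 2 = (w 0 * e 1 - w 1 * e 0) ^ 2 := by linarith
  rw [e2_norm_sq, e2_norm_sq]
  simp only [PiLp.sub_apply, PiLp.add_apply]
  rcases sq_eq_sq_iff_eq_or_eq_neg.mp this with h | h
  · left
    have a1 : w 0 * (f 0 - e 0) + w 1 * (f 1 - e 1) = 0 := by linarith
    have a2 : w 0 * (f 1 - e 1) - w 1 * (f 0 - e 0) = 0 := by linarith
    rw [k, a1, a2]; norm_num
  · right
    have a1 : w 0 * (f 0 + e 0) + w 1 * (f 1 + e 1) = 2 * r := by linarith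
    have a2 : w 0 * (f 1 + e 1) - w 1 * (f 0 + e 0) = 0 := by linarith
    rw [k, a1, a2]; ring

lemma hasDerivAt_speed (P : ℝ → E2) (Q : E2) (u : ℝ) (h : HasDerivAt P Q u) (h0 : P u ≠ 0) :
    HasDerivAt (fun x => ‖P x‖) (inner ℝ (P u) Q / ‖P u‖) u := by
  have h1 := (h.norm_sq).sqrt (by positivity)
  have e : (fun x => √(‖P x‖ ^ 2)) = fun x => ‖P x‖ := by
    ext x; exact Real.sqrt_sq (norm_nonneg _)
  rw [e] at h1
  convert h1 using 1
  rw [Real.sqrt_sq (norm_nonneg _)]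
  field_simp

lemma smooth_data (F : ℝ → ℝ → E2)
    (hF : ContDiff ℝ (⊤ : ℕ∞) (fun p : ℝ × ℝ => F p.1 p.2)) :
    ∃ P X Q Z : ℝ → ℝ → E2,
      Continuous (fun z : ℝ × ℝ => P z.1 z.2) ∧ Continuous (fun z : ℝ × ℝ => Z z.1 z.2) ∧
      (∀ u t, HasDerivAt (fun x => F x t) (P u t) u) ∧
      (∀ u t, HasDerivAt (fun x => F u x) (X u t) t) ∧
      (∀ u t, HasDerivAt (fun x => P x t) (Q u t) u) ∧
      (∀ u t, HasDerivAt (fun x => P u x) (Z u t) t) ∧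
      (∀ u t, HasDerivAt (fun x => X x t) (Z u t) u) := by
  set f : ℝ × ℝ → E2 := fun p => F p.1 p.2 with hf
  have hc1 : ∀ (g : ℝ × ℝ → E2), ContDiff ℝ (⊤ : ℕ∞) g → ∀ w : ℝ × ℝ,
      ContDiff ℝ (⊤ : ℕ∞) (fun z => fderiv ℝ g z w) := by
    intro g hg w
    exact (hg.fderiv_right (m := (⊤ : ℕ∞)) (by simp)).clm_apply contDiff_const
  have d1 : ∀ (g : ℝ × ℝ → E2), ContDiff ℝ (⊤ : ℕ∞) g → ∀ u t,
      HasDerivAt (fun x => g (x, t)) (fderiv ℝ g (u, t) (1, 0)) u := by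
    intro g hg u t
    have h := (hg.differentiable (by simp) (u, t)).hasFDerivAt
    exact h.comp_hasDerivAt u ((hasDerivAt_id u).prodMk (hasDerivAt_const u t))
  have d2 : ∀ (g : ℝ × ℝ → E2), ContDiff ℝ (⊤ : ℕ∞) g → ∀ u t,
      HasDerivAt (fun x => g (u, x)) (fderiv ℝ g (u, t) (0, 1)) t := by
    intro g hg u t
    have h := (hg.differentiable (by simp) (u, t)).hasFDerivAt
    exact h.comp_hasDerivAt t ((hasDerivAt_const t u).prodMk (hasDerivAt_id t))
  have cP := hc1 f hF (1, 0)
  have cX := hc1 f hF (0, 1)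
  have cZ := hc1 _ cP (0, 1)
  refine ⟨fun u t => fderiv ℝ f (u, t) (1, 0), fun u t => fderiv ℝ f (u, t) (0, 1),
    fun u t => fderiv ℝ (fun z => fderiv ℝ f z (1, 0)) (u, t) (1, 0),
    fun u t => fderiv ℝ (fun z => fderiv ℝ f z (1, 0)) (u, t) (0, 1),
    cP.continuous, cZ.continuous, d1 f hF, d2 f hF, d1 _ cP, d2 _ cP, ?_⟩
  intro u t
  have h := d1 _ cX u t
  have hdd : DifferentiableAt ℝ (fderiv ℝ f) (u, t) :=
    (hF.fderiv_right (m := (⊤ : ℕ∞)) (by simp)).differentiable (by simp) _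
  have hs : IsSymmSndFDerivAt ℝ f (u, t) := by
    apply (hF.contDiffAt).isSymmSndFDerivAt
    rw [minSmoothness_of_isRCLikeNormedField]
    exact WithTop.coe_le_coe.2 le_top
  have key : ∀ a b : ℝ × ℝ, fderiv ℝ (fun z => fderiv ℝ f z a) (u, t) b
      = fderiv ℝ (fderiv ℝ f) (u, t) b a := by
    intro a b
    have := (hdd.hasFDerivAt.clm_apply (hasFDerivAt_const a (u, t))).fderiv
    rw [this]; simp
  rw [key] at h
  show HasDerivAt _ (fderiv ℝ (fun z => fderiv ℝ f z (1, 0)) (u, t) (0, 1)) u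
  rw [key, hs]
  exact h

lemma csf_X (F P X Q : ℝ → ℝ → E2) (u t : ℝ)
    (hP : ∀ u t, HasDerivAt (fun x => F x t) (P u t) u)
    (hX : HasDerivAt (fun x => F u x) (X u t) t)
    (hQ : HasDerivAt (fun x => P x t) (Q u t) u)
    (h0 : P u t ≠ 0)
    (hc : CSF.pt F u t = CSF.curv F u t • CSF.nor F u t) :
    X u t = (‖P u t‖⁻¹ ^ 2) • Q u t - (‖P u t‖⁻¹ ^ 4 * inner ℝ (P u t) (Q u t)) • P u t := by
  have hpu : CSF.pu F = P := by
    ext1 u; ext1 t; exact (hP u t).deriv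
  have hpt : CSF.pt F u t = X u t := hX.deriv
  have hv : HasDerivAt (fun x => ‖P x t‖⁻¹) _ u :=
    (hasDerivAt_speed (fun x => P x t) _ u hQ h0).inv (norm_ne_zero_iff.2 h0)
  have hT := hv.smul hQ
  have hTe : (fun x => CSF.tang F x t) = (fun x => ‖P x t‖⁻¹) • fun x => P x t := by
    ext1 x; simp only [CSF.tang, CSF.speed, hpu]; rfl
  rw [← hpt, hc]
  simp only [CSF.curv, CSF.sderiv, CSF.nor, hTe, hT.deriv]
  simp only [CSF.tang, CSF.speed, hpu]
  have hk : ‖P u t‖⁻¹ ^ 2 * (P u t 0 ^ 2 + P u t 1 ^ 2) = 1 := by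
    rw [← e2_norm_sq]
    have := norm_ne_zero_iff.2 h0
    field_simp
  generalize (-(inner ℝ (P u t) (Q u t) / ‖P u t‖) / ‖P u t‖ ^ 2) = c
  generalize ‖P u t‖⁻¹ = k at *
  ext i
  fin_cases i
  · simp [rot, e2_inner]
    linear_combination (k ^ 2 * Q u t 0) * hk
  · simp [rot, e2_inner]
    linear_combination (k ^ 2 * Q u t 1) * hk

/-- First and second order conditions at a fixed time. -/
lemma var_cond (γ P Q : ℝ → E2) (p q r α β : ℝ)
    (hP : ∀ u, HasDerivAt γ (P u) u) (hQ : ∀ u, HasDerivAt P (Q u) u)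
    (hp0 : P p ≠ 0) (hq0 : P q ≠ 0)
    (hm : ∀ᶠ z : ℝ × ℝ in nhds (p, q),
      r ^ 2 * (∫ u in z.1..z.2, ‖P u‖) ^ 2 ≤ ‖γ z.2 - γ z.1‖ ^ 2)
    (he : r ^ 2 * (∫ u in p..q, ‖P u‖) ^ 2 = ‖γ q - γ p‖ ^ 2) :
    inner ℝ (γ q - γ p) (β • P q - α • P p)
        = r ^ 2 * (∫ u in p..q, ‖P u‖) * (β * ‖P q‖ - α * ‖P p‖) ∧
    0 ≤ ‖β • P q - α • P p‖ ^ 2 - r ^ 2 * (β * ‖P q‖ - α * ‖P p‖) ^ 2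
      + inner ℝ (γ q - γ p) (β ^ 2 • Q q - α ^ 2 • Q p)
      - r ^ 2 * (∫ u in p..q, ‖P u‖) * (β ^ 2 * (inner ℝ (P q) (Q q) / ‖P q‖)
          - α ^ 2 * (inner ℝ (P p) (Q p) / ‖P p‖)) := by
  have cP : Continuous P := continuous_iff_continuousAt.2 fun u => (hQ u).continuousAt
  have cv : Continuous fun u => ‖P u‖ := cP.norm
  set S : ℝ → ℝ := fun y => ∫ u in p..y, ‖P u‖ with hS
  have dS : ∀ y, HasDerivAt S ‖P y‖ y := fun y =>
    intervalIntegral.integral_hasDerivAt_right (cv.intervalIntegrable _ _)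
      (cv.stronglyMeasurableAtFilter _ _) cv.continuousAt
  have eS : ∀ x y, (∫ u in x..y, ‖P u‖) = S y - S x := fun x y =>
    (intervalIntegral.integral_interval_sub_left (cv.intervalIntegrable _ _)
      (cv.intervalIntegrable _ _)).symm
  simp only [eS] at hm he ⊢
  have lin : ∀ c d x : ℝ, HasDerivAt (fun τ : ℝ => c + d * τ) d x := fun c d x => by
    simpa using ((hasDerivAt_id x).const_mul d).const_add c
  have lg : ∀ c d x : ℝ, HasDerivAt (fun τ => γ (c + d * τ)) (d • P (c + d * x)) x :=
    fun c d x => HasDerivAt.scomp x (hP _) (lin c d x)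
  have lP : ∀ c d x : ℝ, HasDerivAt (fun τ => P (c + d * τ)) (d • Q (c + d * x)) x :=
    fun c d x => HasDerivAt.scomp x (hQ _) (lin c d x)
  have lS : ∀ c d x : ℝ, HasDerivAt (fun τ => S (c + d * τ)) (‖P (c + d * x)‖ * d) x :=
    fun c d x => HasDerivAt.comp x (dS _) (lin c d x)
  have lv : ∀ c d : ℝ, P c ≠ 0 → HasDerivAt (fun τ => ‖P (c + d * τ)‖)
      ((inner ℝ (P c) (Q c) / ‖P c‖) * d) 0 := fun c d h => by
    have h1 := hasDerivAt_speed (fun τ => P (c + d * τ)) _ 0 (lP c d 0) (by simpa using h)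
    simp only [mul_zero, add_zero, inner_smul_right] at h1
    convert h1 using 1; ring
  have D1 : ∀ x, HasDerivAt (fun τ => γ (q + β * τ) - γ (p + α * τ))
      (β • P (q + β * x) - α • P (p + α * x)) x := fun x => (lg q β x).sub (lg p α x)
  have D2 : HasDerivAt (fun τ => β • P (q + β * τ) - α • P (p + α * τ))
      (β • β • Q (q + β * 0) - α • α • Q (p + α * 0)) 0 :=
    ((lP q β 0).const_smul β).sub ((lP p α 0).const_smul α)
  have S1 : ∀ x, HasDerivAt (fun τ => S (q + β * τ) - S (p + α * τ))
      (‖P (q + β * x)‖ * β - ‖P (p + α * x)‖ * α) x := fun x => (lS q β x).sub (lS p α x)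
  have S2 := ((lv q β hq0).mul_const β).sub ((lv p α hp0).mul_const α)
  have H1 : ∀ x, HasDerivAt (fun τ => ‖γ (q + β * τ) - γ (p + α * τ)‖ ^ 2
      - r ^ 2 * (S (q + β * τ) - S (p + α * τ)) ^ 2)
      (2 * inner ℝ (γ (q + β * x) - γ (p + α * x)) (β • P (q + β * x) - α • P (p + α * x))
        - r ^ 2 * (2 * ((S (q + β * x) - S (p + α * x))
          * (‖P (q + β * x)‖ * β - ‖P (p + α * x)‖ * α)))) x := by
    intro x
    have := ((D1 x).norm_sq).sub (((S1 x).pow 2).const_mul (r ^ 2))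
    refine this.congr_deriv ?_
    push_cast; ring
  have H2 := ((((D1 0).inner ℝ D2).const_mul 2)).sub
    ((((S1 0).mul S2).const_mul 2).const_mul (r ^ 2))
  have key := second_nec _ _ _ H1 H2 ?_
  · simp only [mul_zero, add_zero] at key
    obtain ⟨k1, k2⟩ := key
    constructor
    · linarith
    · simp only [real_inner_self_eq_norm_sq, smul_smul, Pi.sub_apply, mul_zero, add_zero] at k2
      simp only [pow_two β, pow_two α]
      linarith
  · have ct : Tendsto (fun τ : ℝ => (p + α * τ, q + β * τ)) (nhds 0) (nhds (p, q)) := by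
      have : Continuous (fun τ : ℝ => (p + α * τ, q + β * τ)) := by fun_prop
      simpa using this.tendsto 0
    filter_upwards [ct.eventually hm] with τ hτ
    simp only [mul_zero, add_zero]
    linarith

lemma L_deriv (P Z : ℝ → ℝ → E2) (p q t₀ T : ℝ) (hpq : p < q) (ht₀ : t₀ ∈ Ioo 0 T)
    (cP : Continuous (fun z : ℝ × ℝ => P z.1 z.2)) (cZ : Continuous (fun z : ℝ × ℝ => Z z.1 z.2))
    (hZ : ∀ u t, HasDerivAt (fun x => P u x) (Z u t) t)
    (h0 : ∀ u ∈ Icc p q, ∀ t ∈ Ioo 0 T, P u t ≠ 0) :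
    HasDerivAt (fun t => ∫ u in p..q, ‖P u t‖)
      (∫ u in p..q, inner ℝ (P u t₀) (Z u t₀) / ‖P u t₀‖) t₀ := by
  have cP' : ∀ t, Continuous fun u => P u t := fun t =>
    cP.comp (continuous_id.prodMk continuous_const)
  have cZ' : ∀ t, Continuous fun u => Z u t := fun t =>
    cZ.comp (continuous_id.prodMk continuous_const)
  obtain ⟨ε, hε, hb⟩ := Metric.isOpen_iff.1 (isOpen_Ioo (a := (0:ℝ)) (b := T)) t₀ ht₀
  have hcomp : IsCompact ((Icc p q) ×ˢ (Icc (t₀ - ε) (t₀ + ε))) := isCompact_Icc.prod isCompact_Icc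
  obtain ⟨C, hC⟩ := hcomp.exists_bound_of_continuousOn cZ.continuousOn
  have hsub : ∀ u ∈ Set.uIoc p q, u ∈ Icc p q := by
    intro u hu
    rw [Set.uIoc_of_le hpq.le] at hu
    exact ⟨hu.1.le, hu.2⟩
  refine (intervalIntegral.hasDerivAt_integral_of_dominated_loc_of_deriv_le
    (F := fun t u => ‖P u t‖) (F' := fun t u => inner ℝ (P u t) (Z u t) / ‖P u t‖)
    (bound := fun _ => C) (Metric.ball_mem_nhds t₀ hε) ?_ ?_ ?_ ?_ ?_ ?_).2
  · exact Eventually.of_forall fun t => (cP' t).norm.aestronglyMeasurable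
  · exact (cP' t₀).norm.intervalIntegrable _ _
  · exact (((cP' t₀).inner (cZ' t₀)).measurable.div (cP' t₀).norm.measurable).aestronglyMeasurable
  · refine Eventually.of_forall fun u hu t ht => ?_
    have hP0 := norm_pos_iff.2 (h0 u (hsub u hu) t (hb ht))
    have h1 := hC (u, t) ⟨hsub u hu, by
      rw [Real.ball_eq_Ioo] at ht
      exact ⟨ht.1.le, ht.2.le⟩⟩
    rw [norm_div, norm_norm, div_le_iff₀ hP0]
    calc _ ≤ ‖P u t‖ * ‖Z u t‖ := norm_inner_le_norm _ _
      _ ≤ C * ‖P u t‖ := by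
        rw [mul_comm]
        exact mul_le_mul_of_nonneg_right h1 hP0.le
  · exact intervalIntegrable_const
  · refine Eventually.of_forall fun u hu t ht => ?_
    exact hasDerivAt_speed (fun x => P u x) _ t (hZ u t) (h0 u (hsub u hu) t (hb ht))

lemma inner_nonneg_key (Δ P1 P2 Q1 Q2 X1 X2 : E2) (r L : ℝ) (hL : 0 < L)
    (hΔ : Δ ≠ 0) (hr : r = ‖Δ‖ / L) (h1 : P1 ≠ 0) (h2 : P2 ≠ 0)
    (hX1 : X1 = (‖P1‖⁻¹ ^ 2) • Q1 - (‖P1‖⁻¹ ^ 4 * inner ℝ P1 Q1) • P1)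
    (hX2 : X2 = (‖P2‖⁻¹ ^ 2) • Q2 - (‖P2‖⁻¹ ^ 4 * inner ℝ P2 Q2) • P2)
    (hv : ∀ α β : ℝ, inner ℝ Δ (β • P2 - α • P1) = r ^ 2 * L * (β * ‖P2‖ - α * ‖P1‖) ∧
    0 ≤ ‖β • P2 - α • P1‖ ^ 2 - r ^ 2 * (β * ‖P2‖ - α * ‖P1‖) ^ 2
      + inner ℝ Δ (β ^ 2 • Q2 - α ^ 2 • Q1)
      - r ^ 2 * L * (β ^ 2 * (inner ℝ P2 Q2 / ‖P2‖) - α ^ 2 * (inner ℝ P1 Q1 / ‖P1‖))) :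
    0 ≤ inner ℝ Δ (X2 - X1) := by
  have n1 := norm_pos_iff.2 h1
  have n2 := norm_pos_iff.2 h2
  have nd := norm_pos_iff.2 hΔ
  have f1 : inner ℝ Δ P1 = r ^ 2 * L * ‖P1‖ := by
    have := (hv (-1) 0).1
    simpa using this
  have f2 : inner ℝ Δ P2 = r ^ 2 * L * ‖P2‖ := by
    have := (hv 0 1).1
    simpa using this
  have pf := plane_fact (‖Δ‖⁻¹ • Δ) (‖P1‖⁻¹ • P1) (‖P2‖⁻¹ • P2) r
    (by rw [norm_smul, norm_inv, norm_norm]; field_simp)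
    (by rw [norm_smul, norm_inv, norm_norm]; field_simp)
    (by rw [norm_smul, norm_inv, norm_norm]; field_simp)
    (by rw [inner_smul_left, inner_smul_right, f1, hr]; simp; field_simp)
    (by rw [inner_smul_left, inner_smul_right, f2, hr]; simp; field_simp)
  have target : inner ℝ Δ (X2 - X1) = inner ℝ Δ ((‖P2‖⁻¹ ^ 2) • Q2 - (‖P1‖⁻¹ ^ 2) • Q1)
      - r ^ 2 * L * (‖P2‖⁻¹ ^ 2 * (inner ℝ P2 Q2 / ‖P2‖)
        - ‖P1‖⁻¹ ^ 2 * (inner ℝ P1 Q1 / ‖P1‖)) := by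
    rw [hX1, hX2]
    simp only [inner_sub_right, inner_smul_right, f1, f2]
    field_simp
    ring
  have m1 : ‖P1‖⁻¹ * ‖P1‖ = 1 := by field_simp
  have m2 : ‖P2‖⁻¹ * ‖P2‖ = 1 := by field_simp
  rw [target]
  rcases pf with h | h
  · have := (hv ‖P1‖⁻¹ ‖P2‖⁻¹).2
    rw [h, m1, m2] at this
    linarith
  · have := (hv (-‖P1‖⁻¹) ‖P2‖⁻¹).2
    rw [neg_smul, sub_neg_eq_add, h, neg_mul, m1, m2, neg_sq] at this
    linarith

/-- Interior estimate for the distance ratio: if at time t̂ the ratio D/L of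
extrinsic to intrinsic distance attains a local minimum at an interior point (p,q), then
d/dt (D/L)(p,q;t) ≥ 0 at t = t̂. -/
theorem interior_estimate (a b T : ℝ) (hab : a < b) (hT : 0 < T)
    (F : ℝ → ℝ → E2) (hF : CSF.IsCSF F a b T)
    (hemb : ∀ t ∈ Ico 0 T, Set.InjOn (fun u => F u t) (Icc a b))
    (D L : ℝ → ℝ → ℝ → ℝ)
    (hD : ∀ p q t, D p q t = ‖F q t - F p t‖)
    (hL : ∀ p q t, L p q t = ∫ u in p..q, CSF.speed F u t)
    (t₀ : ℝ) (ht₀ : t₀ ∈ Ioo 0 T)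
    (p q : ℝ) (hap : a < p) (hpq : p < q) (hqb : q < b)
    (hne : F p t₀ ≠ F q t₀)
    (hmin : IsLocalMin (fun z : ℝ × ℝ => D z.1 z.2 t₀ / L z.1 z.2 t₀) (p, q)) :
    ∃ d : ℝ, HasDerivAt (fun t => D p q t / L p q t) d t₀ ∧ 0 ≤ d := by
  obtain ⟨hsm, hv0, hcsf⟩ := hF
  obtain ⟨P, X, Q, Z, cP, cZ, hP, hX, hQ, hZ, hXZ⟩ := smooth_data F hsm
  have hpu : CSF.pu F = P := by
    ext1 u; ext1 t; exact (hP u t).deriv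
  have hsp : CSF.speed F = fun u t => ‖P u t‖ := by
    ext u t; simp only [CSF.speed, hpu]
  rw [hpu] at hv0
  simp only [hsp] at hL
  have ht' : t₀ ∈ Ico 0 T := ⟨ht₀.1.le, ht₀.2⟩
  have hXf : ∀ u ∈ Icc a b, X u t₀ = (‖P u t₀‖⁻¹ ^ 2) • Q u t₀
      - (‖P u t₀‖⁻¹ ^ 4 * inner ℝ (P u t₀) (Q u t₀)) • P u t₀ := fun u hu =>
    csf_X F P X Q u t₀ hP (hX u t₀) (hQ u t₀) (hv0 u hu t₀ ht') (hcsf u hu t₀ ht')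
  have hpI : p ∈ Icc a b := ⟨hap.le, by linarith⟩
  have hqI : q ∈ Icc a b := ⟨by linarith, hqb.le⟩
  have hsub : ∀ u ∈ Icc p q, u ∈ Ioo a b := fun u hu =>
    ⟨lt_of_lt_of_le hap hu.1, lt_of_le_of_lt hu.2 hqb⟩
  have cv : Continuous fun u => ‖P u t₀‖ :=
    (cP.comp (continuous_id.prodMk continuous_const)).norm
  -- positivity of L
  have Lpos : ∀ x y, a ≤ x → x < y → y ≤ b → 0 < L x y t₀ := by
    intro x y hx hxy hy
    rw [hL]
    refine intervalIntegral.intervalIntegral_pos_of_pos_on (cv.intervalIntegrable _ _) ?_ hxy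
    intro u hu
    exact norm_pos_iff.2 (hv0 u ⟨by linarith [hu.1], by linarith [hu.2]⟩ t₀ ht')
  have hL0 : 0 < L p q t₀ := Lpos p q hap.le hpq hqb.le
  have hΔ : F q t₀ - F p t₀ ≠ 0 := sub_ne_zero.2 hne.symm
  have hD0 : 0 < ‖F q t₀ - F p t₀‖ := norm_pos_iff.2 hΔ
  set r : ℝ := ‖F q t₀ - F p t₀‖ / L p q t₀ with hr
  have hr0 : 0 < r := div_pos hD0 hL0
  have hm : ∀ᶠ z : ℝ × ℝ in nhds (p, q),
      r ^ 2 * (∫ u in z.1..z.2, ‖P u t₀‖) ^ 2 ≤ ‖F z.2 t₀ - F z.1 t₀‖ ^ 2 := by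
    have o1 : ∀ᶠ z : ℝ × ℝ in nhds (p, q), a < z.1 :=
      continuousAt_fst.eventually (lt_mem_nhds hap)
    have o2 : ∀ᶠ z : ℝ × ℝ in nhds (p, q), z.2 < b :=
      continuousAt_snd.eventually (gt_mem_nhds hqb)
    have o3 : ∀ᶠ z : ℝ × ℝ in nhds (p, q), z.1 < z.2 :=
      (isOpen_lt continuous_fst continuous_snd).mem_nhds hpq
    filter_upwards [hmin, o1, o2, o3] with z hz z1 z2 z3
    have hLz := Lpos z.1 z.2 z1.le z3 z2.le
    simp only [hD] at hz
    rw [← hr, le_div_iff₀ hLz] at hz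
    rw [← hL, ← mul_pow]
    exact pow_le_pow_left₀ (by positivity) hz 2
  have he : r ^ 2 * (∫ u in p..q, ‖P u t₀‖) ^ 2 = ‖F q t₀ - F p t₀‖ ^ 2 := by
    rw [← hL, hr]; field_simp
  have hkey : 0 ≤ inner ℝ (F q t₀ - F p t₀) (X q t₀ - X p t₀) := by
    refine inner_nonneg_key _ (P p t₀) (P q t₀) (Q p t₀) (Q q t₀) _ _ r (L p q t₀) hL0 hΔ hr
      (hv0 p hpI t₀ ht') (hv0 q hqI t₀ ht') (hXf p hpI) (hXf q hqI) ?_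
    intro α β
    have := var_cond (fun u => F u t₀) (fun u => P u t₀) (fun u => Q u t₀) p q r α β
      (fun u => hP u t₀) (fun u => hQ u t₀) (hv0 p hpI t₀ ht') (hv0 q hqI t₀ ht') hm he
    rw [← hL] at this
    exact this
  have dD : HasDerivAt (fun t => D p q t)
      (inner ℝ (F q t₀ - F p t₀) (X q t₀ - X p t₀) / ‖F q t₀ - F p t₀‖) t₀ := by
    simp only [hD]
    exact hasDerivAt_speed (fun t => F q t - F p t) _ t₀ ((hX q t₀).sub (hX p t₀)) hΔ
  have dL : HasDerivAt (fun t => L p q t)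
      (∫ u in p..q, inner ℝ (P u t₀) (Z u t₀) / ‖P u t₀‖) t₀ := by
    simp only [hL]
    exact L_deriv P Z p q t₀ T hpq ht₀ cP cZ hZ fun u hu t ht =>
      hv0 u (Ioo_subset_Icc_self (hsub u hu)) t ⟨ht.1.le, ht.2⟩
  have hLt : (∫ u in p..q, inner ℝ (P u t₀) (Z u t₀) / ‖P u t₀‖) ≤ 0 := by
    rw [← neg_nonneg, ← intervalIntegral.integral_neg]
    refine intervalIntegral.integral_nonneg hpq.le fun u hu => ?_
    have huI := hsub u hu
    have hP0 := hv0 u (Ioo_subset_Icc_self huI) t₀ ht'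
    have n0 := norm_pos_iff.2 hP0
    have orth : ∀ x ∈ Ioo a b, inner ℝ (X x t₀) (P x t₀) = 0 := by
      intro x hx
      have nx := norm_pos_iff.2 (hv0 x (Ioo_subset_Icc_self hx) t₀ ht')
      rw [hXf x (Ioo_subset_Icc_self hx), inner_sub_left, inner_smul_left, inner_smul_left,
        real_inner_self_eq_norm_sq, real_inner_comm]
      simp
      field_simp
      ring
    have hd := (hXZ u t₀).inner ℝ (hQ u t₀)
    have hz : (fun x => inner ℝ (X x t₀) (P x t₀)) =ᶠ[nhds u] fun _ => (0:ℝ) := by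
      filter_upwards [Ioo_mem_nhds huI.1 huI.2] with x hx using orth x hx
    have h0 := (hd.congr_of_eventuallyEq hz.symm).unique (hasDerivAt_const u (0:ℝ))
    have hcs : 0 ≤ inner ℝ (X u t₀) (Q u t₀) := by
      rw [hXf u (Ioo_subset_Icc_self huI), inner_sub_left, inner_smul_left, inner_smul_left,
        real_inner_self_eq_norm_sq]
      have cs := real_inner_mul_inner_self_le (P u t₀) (Q u t₀)
      rw [real_inner_self_eq_norm_sq, real_inner_self_eq_norm_sq] at cs
      have e : ‖P u t₀‖⁻¹ ^ 2 * ‖Q u t₀‖ ^ 2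
          - ‖P u t₀‖⁻¹ ^ 4 * inner ℝ (P u t₀) (Q u t₀) * inner ℝ (P u t₀) (Q u t₀)
          = ‖P u t₀‖⁻¹ ^ 4 * (‖P u t₀‖ ^ 2 * ‖Q u t₀‖ ^ 2
            - inner ℝ (P u t₀) (Q u t₀) * inner ℝ (P u t₀) (Q u t₀)) := by
        field_simp
      simp only [conj_trivial]
      rw [e]
      exact mul_nonneg (by positivity) (by linarith)
    rw [← neg_div]
    refine div_nonneg ?_ n0.le
    rw [real_inner_comm]
    linarith
  refine ⟨_, dD.div dL hL0.ne', ?_⟩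
  refine div_nonneg ?_ (sq_nonneg _)
  have a1 := mul_nonneg (div_nonneg hkey hD0.le) hL0.le
  have a2 : 0 ≤ D p q t₀ := by rw [hD]; positivity
  have a3 := mul_nonneg_of_nonpos_of_nonpos (neg_nonpos.2 a2) hLt
  linarith
end
end

section
/- (Sequence lemma for type 2 singularities) Let ε > 0, let t* < ∞, let (t_n)_{n≥0} be a strictly increasing sequence in [0,t*) converging to t*, and let (K_n)_{n≥0} be positive reals satisfying K_{n+1} = (1+ε) K_n for all n. If limsup_{m→∞} K_m² (t_{m+1} - t_m) < ∞, then sup_n (t* - t_n) K_n² < ∞. Equivalently, if (t* - t_n) K_n² is unbounded then limsup_{m→∞} K_m² (t_{m+1} - t_m) = +∞. -/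
open Real Set Filter

/-- Sequence lemma for type 2 singularities: if tₙ ↑ t* < ∞ and Kₙ > 0 with
K_{n+1} = (1+ε)Kₙ, and limsup Kₘ²(t_{m+1} - tₘ) < ∞ (i.e. Kₘ²(t_{m+1} - tₘ) is eventually
bounded above), then (t* - tₙ)Kₙ² is bounded. -/
theorem type2_sequence_lemma (ε : ℝ) (hε : 0 < ε) (tstar : ℝ)
    (t : ℕ → ℝ) (K : ℕ → ℝ)
    (hmono : StrictMono t) (hmem : ∀ n, t n ∈ Ico (0 : ℝ) tstar)
    (hlim : Tendsto t atTop (nhds tstar))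
    (hKpos : ∀ n, 0 < K n) (hKrec : ∀ n, K (n + 1) = (1 + ε) * K n)
    (hlimsup : ∃ C : ℝ, ∀ᶠ m in atTop, (K m) ^ 2 * (t (m + 1) - t m) ≤ C) :
    ∃ C : ℝ, ∀ n, (tstar - t n) * (K n) ^ 2 ≤ C := by
  obtain ⟨C, hC⟩ := hlimsup
  obtain ⟨N, hN⟩ := eventually_atTop.1 hC
  have hKmono : Monotone K := monotone_nat_of_le_succ (fun n => by
    rw [hKrec]; nlinarith [hKpos n])
  have hq : 0 < (1 + ε) ^ 2 - 1 := by nlinarith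
  have hC0 : 0 < C := by
    have h1 := hN N le_rfl
    have h2 : 0 < t (N + 1) - t N := sub_pos.2 (hmono (Nat.lt_succ_self N))
    have h3 := mul_pos (pow_pos (hKpos N) 2) h2
    linarith
  obtain ⟨D, hD⟩ : ∃ D : ℝ, D = C * (1 + ε) ^ 2 / ((1 + ε) ^ 2 - 1) := ⟨_, rfl⟩
  have hD0 : 0 < D := by rw [hD]; positivity
  have hstep : ∀ m, N ≤ m → t (m + 1) + D / K (m + 1) ^ 2 ≤ t m + D / K m ^ 2 := by
    intro m hm
    have h1 := hN m hm
    have hK := hKpos m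
    have h2 : t (m + 1) - t m ≤ C / K m ^ 2 := by
      rw [le_div_iff₀ (by positivity)]; linarith
    have h3 : D / K m ^ 2 - D / K (m + 1) ^ 2 = C / K m ^ 2 := by
      rw [hKrec, hD]
      have := hq.ne'
      have h5 : (1 + ε) ≠ 0 := by positivity
      generalize 1 + ε = r at *
      field_simp
    linarith
  have hanti : ∀ n, N ≤ n → ∀ m, n ≤ m → t m + D / K m ^ 2 ≤ t n + D / K n ^ 2 := by
    intro n hn m hm
    induction m, hm using Nat.le_induction with
    | base => exact le_rfl
    | succ m hm ih => exact (hstep m (hn.trans hm)).trans ih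
  refine ⟨max D (tstar * K N ^ 2), fun n => ?_⟩
  have hK := hKpos n
  rcases le_total N n with hn | hn
  · apply le_max_of_le_left
    have h : tstar ≤ t n + D / K n ^ 2 := by
      refine le_of_tendsto hlim ?_
      filter_upwards [eventually_ge_atTop n] with m hm
      have h1 := hanti n hn m hm
      have h2 : 0 < D / K m ^ 2 := div_pos hD0 (pow_pos (hKpos m) 2)
      linarith
    rw [← le_div_iff₀ (by positivity)]
    linarith
  · apply le_max_of_le_right
    have h1 := hmem n
    have h2 : K n ≤ K N := hKmono hn
    have h3 : 0 ≤ tstar := h1.1.trans h1.2.le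
    have h4 : tstar - t n ≤ tstar := by linarith [h1.1]
    gcongr
end
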